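/- arXiv:2311.00185 — 16 statements merged into one kernel-verified Lean document; each statement's English description precedes it below -/
import Mathlib

section
/- Let n ≥ 1, let P ⊆ [0,1]^n be a convex set, let j ∈ {1,…,n} and a ∈ {0,1}. Then L(P) ∩ {x : x_j = a} = L(P ∩ {x : x_j = a}). -/
open Set

def cube (n : ℕ) : Set (Fin n → ℝ) := {x | ∀ i, 0 ≤ x i ∧ x i ≤ 1}

def Lop (n : ℕ) (P : Set (Fin n → ℝ)) : Set (Fin n → ℝ) :=
  ⋂ i : Fin n, convexHull ℝ ((P ∩ {x | x i = 0}) ∪ (P ∩ {x | x i = 1}))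

lemma cube_convex (n : ℕ) : Convex ℝ (cube n) := by
  rw [convex_iff_forall_pos]
  intro x hx y hy p q hp hq hpq i
  have h1 := hx i
  have h2 := hy i
  simp only [Pi.add_apply, Pi.smul_apply, smul_eq_mul]
  constructor <;> nlinarith

lemma hull_face (n : ℕ) (S : Set (Fin n → ℝ)) (hS : S ⊆ cube n) (j : Fin n) (a : ℝ)
    (ha : a = 0 ∨ a = 1) (x : Fin n → ℝ) (hx : x ∈ convexHull ℝ S) (hxj : x j = a) :
    x ∈ convexHull ℝ (S ∩ {x | x j = a}) := by
  have hT : Convex ℝ {x | x ∈ cube n ∧ (x j = a → x ∈ convexHull ℝ (S ∩ {x | x j = a}))} := by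
    rw [convex_iff_forall_pos]
    intro x hx y hy p q hp hq hpq
    refine ⟨cube_convex n hx.1 hy.1 hp.le hq.le hpq, fun h => ?_⟩
    have h1 := hx.1 j
    have h2 := hy.1 j
    simp only [Pi.add_apply, Pi.smul_apply, smul_eq_mul] at h
    have hxa : x j = a := by
      rcases ha with rfl | rfl <;> nlinarith [mul_nonneg hq.le h2.1, mul_nonneg hq.le (sub_nonneg.2 h2.2)]
    have hya : y j = a := by
      rcases ha with rfl | rfl <;> nlinarith [mul_nonneg hp.le h1.1, mul_nonneg hp.le (sub_nonneg.2 h1.2)]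
    exact convex_convexHull ℝ _ (hx.2 hxa) (hy.2 hya) hp.le hq.le hpq
  have hsub : S ⊆ {x | x ∈ cube n ∧ (x j = a → x ∈ convexHull ℝ (S ∩ {x | x j = a}))} :=
    fun y hy => ⟨hS hy, fun h => subset_convexHull ℝ _ ⟨hy, h⟩⟩
  exact (convexHull_min hsub hT hx).2 hxj

theorem stmt0 (n : ℕ) (hn : 1 ≤ n) (P : Set (Fin n → ℝ)) (hPcube : P ⊆ cube n)
    (hPconv : Convex ℝ P) (j : Fin n) (a : ℝ) (ha : a = 0 ∨ a = 1) :
    Lop n P ∩ {x | x j = a} = Lop n (P ∩ {x | x j = a}) := by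
  have hconv : Convex ℝ {x : Fin n → ℝ | x j = a} := by
    intro x hx y hy p q hp hq hpq
    simp only [mem_setOf_eq, Pi.add_apply, Pi.smul_apply, smul_eq_mul] at *
    rw [hx, hy, ← add_mul, hpq, one_mul]
  have key : ∀ i : Fin n, ((P ∩ {x | x i = 0}) ∪ (P ∩ {x | x i = 1})) ∩ {x | x j = a} =
      ((P ∩ {x | x j = a}) ∩ {x | x i = 0}) ∪ ((P ∩ {x | x j = a}) ∩ {x | x i = 1}) := by
    intro i
    ext x
    simp only [mem_inter_iff, mem_union, mem_setOf_eq]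
    tauto
  ext x
  simp only [Lop, mem_inter_iff, mem_iInter, ← key]
  constructor
  · rintro ⟨h, hj⟩ i
    refine hull_face n _ ?_ j a ha x (h i) hj
    rintro y (hy | hy) <;> exact hPcube hy.1
  · intro h
    exact ⟨fun i => convexHull_mono inter_subset_left (h i),
      convexHull_min inter_subset_right hconv (h j)⟩
end

section
/- Let n ≥ 1, let a ∈ ℝ^n with a ≠ 0, and let b, b' ∈ ℝ with b' > b. Let s^1, …, s^n be affinely independent points of ℝ^n satisfying a·s^i = b for all i ∈ {1,…,n}. Let R be a nonempty bounded subset of {x ∈ ℝ^n : a·x ≥ b'}. Then there exists a point x ∈ ℝ^n with a·x > b such that x ∈ conv({s^1, …, s^n, r}) for every r ∈ R. -/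
open Set

def dotp {n : ℕ} (a x : Fin n → ℝ) : ℝ := ∑ i, a i * x i

lemma dotp_comb {n : ℕ} (a : Fin n → ℝ) {ι : Type} [Fintype ι] (w : ι → ℝ) (p : ι → Fin n → ℝ) :
    dotp a (∑ i, w i • p i) = ∑ i, w i * dotp a (p i) := by
  simp only [dotp, Finset.sum_apply, Pi.smul_apply, smul_eq_mul, Finset.mul_sum]
  rw [Finset.sum_comm]
  refine Finset.sum_congr rfl fun i _ => Finset.sum_congr rfl fun j _ => by ring

lemma dotp_add' {n : ℕ} (a x y : Fin n → ℝ) : dotp a (x + y) = dotp a x + dotp a y := by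
  simp [dotp, mul_add, Finset.sum_add_distrib]

lemma dotp_smul' {n : ℕ} (a x : Fin n → ℝ) (c : ℝ) : dotp a (c • x) = c * dotp a x := by
  simp only [dotp, Pi.smul_apply, smul_eq_mul, Finset.mul_sum]
  refine Finset.sum_congr rfl fun i _ => by ring

theorem stmt2 (n : ℕ) (hn : 1 ≤ n) (a : Fin n → ℝ) (ha : a ≠ 0) (b b' : ℝ) (hbb : b < b')
    (s : Fin n → (Fin n → ℝ)) (hs : AffineIndependent ℝ s) (hsb : ∀ i, dotp a (s i) = b)
    (R : Set (Fin n → ℝ)) (hRne : R.Nonempty) (hRbdd : Bornology.IsBounded R)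
    (hR : R ⊆ {x | b' ≤ dotp a x}) :
    ∃ x : Fin n → ℝ, b < dotp a x ∧ ∀ r ∈ R, x ∈ convexHull ℝ (Set.range s ∪ {r}) := by
  obtain ⟨r0, hr0⟩ := hRne
  have hr0b : b' ≤ dotp a r0 := hR hr0
  have hh0 : 0 < dotp a r0 - b := by linarith
  let p : Option (Fin n) → (Fin n → ℝ) := fun o => o.elim r0 s
  have hp : AffineIndependent ℝ p := by
    rw [affineIndependent_iff_of_fintype] at hs ⊢
    intro w hw hw2
    rw [Finset.weightedVSub_eq_linear_combination _ hw] at hw2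
    have h1 := dotp_comb a w p
    rw [hw2] at h1
    simp only [Fintype.sum_option, p, Option.elim, hsb] at h1 hw hw2
    have h0 : dotp a 0 = 0 := by simp [dotp]
    rw [h0, ← Finset.sum_mul] at h1
    have h2 : w none * (dotp a r0 - b) = 0 := by linear_combination (-1 : ℝ) * h1 - b * hw
    have h3 : w none = 0 := by
      rcases mul_eq_zero.1 h2 with h | h
      · exact h
      · exact absurd h hh0.ne'
    rw [h3, zero_add] at hw
    rw [h3, zero_smul, zero_add] at hw2
    have h4 := hs (fun i => w (some i)) hw
      (by rw [Finset.weightedVSub_eq_linear_combination _ hw]; exact hw2)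
    rintro (_ | i)
    · exact h3
    · exact h4 i
  have htop : affineSpan ℝ (Set.range p) = ⊤ := by
    rw [hp.affineSpan_eq_top_iff_card_eq_finrank_add_one]
    simp
  let B : AffineBasis (Option (Fin n)) ℝ (Fin n → ℝ) := ⟨p, hp, htop⟩
  have hcomb : ∀ r, B.coord none r • r0 + ∑ i, B.coord (some i) r • s i = r := by
    intro r
    have := B.linear_combination_coord_eq_self r
    rw [Fintype.sum_option] at this
    exact this
  have hsum : ∀ r, B.coord none r + ∑ i, B.coord (some i) r = 1 := by
    intro r
    have := B.sum_coord_apply_eq_one r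
    rwa [Fintype.sum_option] at this
  have ht : ∀ r, B.coord none r * (dotp a r0 - b) = dotp a r - b := by
    intro r
    have h1 := congrArg (dotp a) (hcomb r)
    rw [dotp_add', dotp_smul', dotp_comb] at h1
    simp only [hsb] at h1
    rw [← Finset.sum_mul] at h1
    linear_combination h1 - b * hsum r
  have hM : ∃ M : ℝ, 0 ≤ M ∧ ∀ i, ∀ r ∈ R, B.coord (some i) r ≤ M := by
    have h1 : ∀ i : Fin n, ∃ M : ℝ, ∀ r ∈ R, B.coord (some i) r ≤ M := by
      intro i
      have hc : IsCompact (closure R) := hRbdd.isCompact_closure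
      obtain ⟨M, hM⟩ := (hc.image (continuous_barycentric_coord B (some i))).bddAbove
      exact ⟨M, fun r hr => hM ⟨r, subset_closure hr, rfl⟩⟩
    choose M hM using h1
    refine ⟨∑ i, |M i|, Finset.sum_nonneg fun i _ => abs_nonneg _, fun i r hr => ?_⟩
    exact ((hM i r hr).trans (le_abs_self _)).trans
      (Finset.single_le_sum (f := fun i => |M i|) (fun i _ => abs_nonneg _) (Finset.mem_univ i))
  obtain ⟨M, hM0, hM⟩ := hM
  have hnpos : (0 : ℝ) < n := by exact_mod_cast hn
  obtain ⟨t0, ht0def⟩ : ∃ t0, t0 = (b' - b) / (dotp a r0 - b) := ⟨_, rfl⟩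
  have ht0 : 0 < t0 := by rw [ht0def]; exact div_pos (by linarith) hh0
  have htge : ∀ r ∈ R, t0 ≤ B.coord none r := by
    intro r hr
    rw [ht0def, div_le_iff₀ hh0, ht r]
    have : b' ≤ dotp a r := hR hr
    linarith
  have hden : 0 < 1 + n * (M / t0) := by positivity
  obtain ⟨ε, hε⟩ : ∃ ε, ε = 1 / (1 + n * (M / t0)) := ⟨_, rfl⟩
  have hεpos : 0 < ε := by rw [hε]; positivity
  have hεeq : (1 - ε) / n = ε * (M / t0) := by
    have : ε * (1 + n * (M / t0)) = 1 := by rw [hε]; field_simp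
    rw [div_eq_iff hnpos.ne']
    linear_combination (-1 : ℝ) * this
  refine ⟨∑ i, ((1 - ε) / n) • s i + ε • r0, ?_, ?_⟩
  · rw [dotp_add', dotp_smul', dotp_comb]
    simp only [hsb, Finset.sum_const, Finset.card_univ, Fintype.card_fin, nsmul_eq_mul]
    have : (n : ℝ) * ((1 - ε) / n * b) = (1 - ε) * b := by field_simp
    rw [this]
    nlinarith
  · intro r hr
    have htr := htge r hr
    have hcr := hcomb r
    have hsr := hsum r
    have hMr : ∀ i, B.coord (some i) r ≤ M := fun i => hM i r hr
    generalize B.coord none r = t at htr hcr hsr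
    generalize hw : (fun i => B.coord (some i) r) = w
    have hw' : ∀ i, B.coord (some i) r = w i := fun i => congrFun hw i
    simp only [hw'] at hcr hsr hMr
    have htpos : 0 < t := ht0.trans_le htr
    let c : Option (Fin n) → ℝ := fun o => o.elim (ε / t) (fun i => (1 - ε) / n - ε / t * w i)
    let q : Option (Fin n) → (Fin n → ℝ) := fun o => o.elim r s
    have hx : ∑ i, ((1 - ε) / n) • s i + ε • r0 = ∑ o, c o • q o := by
      simp only [Fintype.sum_option, c, q, Option.elim, sub_smul, Finset.sum_sub_distrib, mul_smul,
        ← Finset.smul_sum]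
      have : (ε / t) • r = ε • r0 + (ε / t) • ∑ i, w i • s i := by
        conv_lhs => rw [← hcr]
        rw [smul_add, smul_smul, div_mul_cancel₀ _ htpos.ne']
      rw [this]
      abel
    rw [hx]
    refine (convex_convexHull ℝ _).sum_mem ?_ ?_ ?_
    · rintro (_ | i) _
      · exact (div_pos hεpos htpos).le
      · change 0 ≤ (1 - ε) / n - ε / t * w i
        rw [hεeq, sub_nonneg]
        calc ε / t * w i ≤ ε / t * M := by
              exact mul_le_mul_of_nonneg_left (hMr i) (div_pos hεpos htpos).le
          _ ≤ ε / t0 * M := by gcongr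
          _ = ε * (M / t0) := by ring
    · simp only [Fintype.sum_option, c, Option.elim, Finset.sum_sub_distrib, ← Finset.mul_sum,
        Finset.sum_const, Finset.card_univ, Fintype.card_fin, nsmul_eq_mul]
      have h1 : ∑ i, w i = 1 - t := by linarith
      rw [h1]
      field_simp
      ring
    · rintro (_ | i) _
      · exact subset_convexHull ℝ _ (Or.inr rfl)
      · exact subset_convexHull ℝ _ (Or.inl ⟨i, rfl⟩)
end

section
/- Let n ≥ 2 and t ∈ {1,…,n−1}. Let P ⊆ [0,1]^n be a convex set, let c ∈ ℝ^n with c ≠ 0, and let δ ∈ ℝ. For J ⊆ {1,…,n} write P^J := P ∩ {x : x_j = 0 for all j ∈ J}. Assume: (i) P_I contains n+1 affinely independent points; (ii) c·x ≥ δ for all x ∈ P_I, and the set {x ∈ P_I : c·x = δ} contains n affinely independent points; (iii) for every J ⊆ {1,…,n} with |J| = n−t: the set (P^J)_I contains t+1 affinely independent points, the set {x ∈ (P^J)_I : c·x = δ} contains t affinely independent points, and there exists x^J ∈ P^J with c·x^J < δ. Then there exists x̄ ∈ L^{n−t}(P) with c·x̄ < δ; in particular L^{n−t}(P) ≠ P_I.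 -/
open Set

def corners (n : ℕ) : Set (Fin n → ℝ) := {x | ∀ i, x i = 0 ∨ x i = 1}

def integerHull (n : ℕ) (P : Set (Fin n → ℝ)) : Set (Fin n → ℝ) :=
  convexHull ℝ (P ∩ corners n)

def Lk (n : ℕ) : ℕ → Set (Fin n → ℝ) → Set (Fin n → ℝ)
  | 0, P => P
  | k + 1, P => Lop n (Lk n k P)

/-- `P^J` : the points of `P` with all coordinates in `J` fixed to zero. -/
def restr (n : ℕ) (P : Set (Fin n → ℝ)) (J : Finset (Fin n)) : Set (Fin n → ℝ) :=
  P ∩ {x | ∀ j ∈ J, x j = 0}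

open Topology in
theorem aux_interior {n : ℕ} (F : Set (Fin n → ℝ)) (hF : Convex ℝ F) (hne : F.Nonempty) :
    ∃ z ∈ F, ∀ v ∈ vectorSpan ℝ F, ∀ᶠ e in 𝓝 (0:ℝ), z + e • v ∈ F := by
  obtain ⟨z, hz⟩ := hne.intrinsicInterior hF
  obtain ⟨y, hy, rfl⟩ := mem_intrinsicInterior.1 hz
  refine ⟨y, intrinsicInterior_subset hz, fun v hv => ?_⟩
  have hmem : ∀ e : ℝ, (y : Fin n → ℝ) + e • v ∈ affineSpan ℝ F := by
    intro e
    have := AffineSubspace.vadd_mem_of_mem_direction (s := affineSpan ℝ F) (v := e • v)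
      (by rw [direction_affineSpan]; exact Submodule.smul_mem _ _ hv) y.2
    rwa [vadd_eq_add, add_comm] at this
  let g : ℝ → affineSpan ℝ F := fun e => ⟨y + e • v, hmem e⟩
  have hg : Continuous g := by
    apply Continuous.subtype_mk
    fun_prop
  have hg0 : g 0 = y := by
    apply Subtype.ext
    simp [g]
  have h1 := hg.continuousAt (x := 0)
  have h2 : ∀ᶠ p in 𝓝 (g 0), p ∈ ((↑) ⁻¹' F : Set (affineSpan ℝ F)) := by
    rw [hg0]; exact mem_interior_iff_mem_nhds.1 hy
  exact h1.eventually h2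

theorem aux_finrank {n : ℕ} (W : Submodule ℝ (Fin n → ℝ)) (K : Finset (Fin n))
    (h : ∀ v ∈ W, (∀ i, i ∉ K → v i = 0) → v = 0) : Module.finrank ℝ W ≤ n - K.card := by
  let f : W →ₗ[ℝ] ({i // i ∉ K} → ℝ) :=
    (LinearMap.funLeft ℝ ℝ (Subtype.val : {i // i ∉ K} → Fin n)).comp W.subtype
  have hf : Function.Injective f := by
    rw [← LinearMap.ker_eq_bot, LinearMap.ker_eq_bot']
    intro m hm
    apply Subtype.ext
    refine h m.1 m.2 fun i hi => ?_
    exact congrFun hm ⟨i, hi⟩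
  have := LinearMap.finrank_le_finrank_of_injective hf
  simpa [Fintype.card_subtype_compl] using this

theorem dotp_lin {n : ℕ} (c x y : Fin n → ℝ) (a b : ℝ) :
    dotp c (a • x + b • y) = a * dotp c x + b * dotp c y := by
  simp only [dotp, Finset.mul_sum, ← Finset.sum_add_distrib]
  refine Finset.sum_congr rfl fun i _ => ?_
  simp; ring

theorem dotp_sub {n : ℕ} (c x y : Fin n → ℝ) : dotp c (x - y) = dotp c x - dotp c y := by
  have := dotp_lin c x y 1 (-1)
  simp only [one_smul, neg_smul, ← sub_eq_add_neg] at this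
  rw [this]; ring

def Wsub {n : ℕ} (c : Fin n → ℝ) (J : Finset (Fin n)) : Submodule ℝ (Fin n → ℝ) where
  carrier := {v | (∀ j ∈ J, v j = 0) ∧ dotp c v = 0}
  zero_mem' := by simp [dotp]
  add_mem' := by
    rintro a b ⟨ha, ha'⟩ ⟨hb, hb'⟩
    refine ⟨fun j hj => by simp [ha j hj, hb j hj], ?_⟩
    have := dotp_lin c a b 1 1
    simpa [ha', hb'] using this
  smul_mem' := by
    rintro r a ⟨ha, ha'⟩
    refine ⟨fun j hj => by simp [ha j hj], ?_⟩
    have := dotp_lin c a a r 0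
    simpa [ha'] using this

theorem mem_Wsub {n : ℕ} (c : Fin n → ℝ) (J : Finset (Fin n)) (v : Fin n → ℝ) :
    v ∈ Wsub c J ↔ (∀ j ∈ J, v j = 0) ∧ dotp c v = 0 := Iff.rfl

def FJ (n : ℕ) (P : Set (Fin n → ℝ)) (c : Fin n → ℝ) (δ : ℝ) (J : Finset (Fin n)) :
    Set (Fin n → ℝ) := {x | x ∈ integerHull n (restr n P J) ∧ dotp c x = δ}

theorem FJ_convex (n : ℕ) (P : Set (Fin n → ℝ)) (c : Fin n → ℝ) (δ : ℝ) (J : Finset (Fin n)) :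
    Convex ℝ (FJ n P c δ J) := by
  rintro x ⟨hx, hx'⟩ y ⟨hy, hy'⟩ a b ha hb hab
  refine ⟨convex_convexHull ℝ _ hx hy ha hb hab, ?_⟩
  rw [dotp_lin, hx', hy', ← add_mul, hab, one_mul]

theorem FJ_anti (n : ℕ) (P : Set (Fin n → ℝ)) (c : Fin n → ℝ) (δ : ℝ) {J K : Finset (Fin n)}
    (h : J ⊆ K) : FJ n P c δ K ⊆ FJ n P c δ J := by
  rintro x ⟨hx, hx'⟩
  refine ⟨convexHull_mono ?_ hx, hx'⟩
  rintro y ⟨⟨h1, h2⟩, h3⟩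
  exact ⟨⟨h1, fun j hj => h2 j (h hj)⟩, h3⟩

theorem hull_zero (n : ℕ) (P : Set (Fin n → ℝ)) (J : Finset (Fin n)) (x : Fin n → ℝ)
    (hx : x ∈ integerHull n (restr n P J)) : ∀ j ∈ J, x j = 0 := by
  have hc : Convex ℝ {x : Fin n → ℝ | ∀ j ∈ J, x j = 0} := by
    intro x hx y hy a b _ _ _ j hj
    simp [hx j hj, hy j hj]
  exact convexHull_min (fun y hy => hy.1.2) hc hx

theorem hull_coord (n : ℕ) (P : Set (Fin n → ℝ)) (i : Fin n) (r : ℝ)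
    (h : ∀ x ∈ P ∩ corners n, x i = r) (x : Fin n → ℝ)
    (hx : x ∈ integerHull n P) : x i = r := by
  have hc : Convex ℝ {x : Fin n → ℝ | x i = r} := by
    intro x hx y hy a b _ _ hab
    have hx : x i = r := hx
    have hy : y i = r := hy
    simp [hx, hy, ← add_mul, hab]
  exact convexHull_min h hc hx

/-- A full-dimensional `(P^J)_I` is not contained in a hyperplane `x i = r`. -/
theorem exists_corner (n t : ℕ) (ht1 : 1 ≤ t) (htn : t ≤ n - 1)
    (P : Set (Fin n → ℝ)) (J : Finset (Fin n)) (hJc : J.card = n - t) (i : Fin n) (hi : i ∉ J)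
    (s : Fin (t + 1) → (Fin n → ℝ)) (hs : AffineIndependent ℝ s)
    (hs' : ∀ i, s i ∈ integerHull n (restr n P J)) (r : ℝ) :
    ∃ x ∈ restr n P J ∩ corners n, x i ≠ r := by
  by_contra! hcon
  have h1 : ∀ a, s a i = r := fun a => hull_coord n _ i r hcon _ (hs' a)
  have h2 := hs.finrank_vectorSpan (n := t) (by simp)
  have h3 := aux_finrank (vectorSpan ℝ (Set.range s)) (insert i J) (by
    intro v hv h0
    have hv0 : ∀ j ∈ insert i J, v j = 0 := by
      intro j hj
      have hle : vectorSpan ℝ (Set.range s) ≤ LinearMap.ker (LinearMap.proj j : (Fin n → ℝ) →ₗ[ℝ] ℝ) := by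
        rw [vectorSpan_def, Submodule.span_le]
        rintro w ⟨_, ⟨a, rfl⟩, _, ⟨b, rfl⟩, rfl⟩
        rcases Finset.mem_insert.1 hj with rfl | hj
        · simp [h1]
        · simp [hull_zero n P J _ (hs' a) j hj, hull_zero n P J _ (hs' b) j hj]
      exact hle hv
    funext j
    by_cases hj : j ∈ insert i J
    · exact hv0 j hj
    · exact h0 j hj)
  rw [h2, Finset.card_insert_of_notMem hi, hJc] at h3
  omega

theorem Lk_convex (n : ℕ) (P : Set (Fin n → ℝ)) (hP : Convex ℝ P) (k : ℕ) :
    Convex ℝ (Lk n k P) := by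
  cases k with
  | zero => exact hP
  | succ k => exact convex_iInter fun i => convex_convexHull ℝ _

theorem corners_Lk (n : ℕ) (P : Set (Fin n → ℝ)) (k : ℕ) :
    P ∩ corners n ⊆ Lk n k P := by
  induction k with
  | zero => exact fun x hx => hx.1
  | succ k ih =>
    intro x hx
    refine mem_iInter.2 fun i => subset_convexHull ℝ _ ?_
    rcases hx.2 i with h | h
    · exact Or.inl ⟨ih hx, h⟩
    · exact Or.inr ⟨ih hx, h⟩

/-- The geometric step: a point just below the facet lies in every `conv (F ∪ {y i})`. -/
theorem below_point {n : ℕ} (F : Set (Fin n → ℝ)) (hF : Convex ℝ F) (hne : F.Nonempty)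
    (c : Fin n → ℝ) (δ : ℝ) (J : Finset (Fin n))
    (hF0 : ∀ x ∈ F, (∀ j ∈ J, x j = 0) ∧ dotp c x = δ)
    (hW : Wsub c J ≤ vectorSpan ℝ F)
    (y : Fin n → (Fin n → ℝ)) (hy : ∀ i, i ∉ J → (∀ j ∈ J, y i j = 0) ∧ dotp c (y i) < δ)
    (i0 : Fin n) (hi0 : i0 ∉ J) :
    ∃ u : Fin n → ℝ, dotp c u < δ ∧ (∀ j ∈ J, u j = 0) ∧
      ∀ i, i ∉ J → ∃ f ∈ F, ∃ a b : ℝ, 0 ≤ a ∧ 0 ≤ b ∧ a + b = 1 ∧ u = a • f + b • y i := by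
  obtain ⟨z, hzF, hz⟩ := aux_interior F hF hne
  obtain ⟨hz0, hzc⟩ := hF0 z hzF
  have key : ∀ i, ∀ᶠ e in nhdsWithin (0:ℝ) (Ioi 0), i ∉ J →
      ∃ f ∈ F, ∃ a b : ℝ, 0 ≤ a ∧ 0 ≤ b ∧ a + b = 1 ∧
        z + e • (y i0 - z) = a • f + b • y i := by
    intro i
    by_cases hi : i ∈ J
    · exact Filter.Eventually.of_forall fun e h => absurd hi h
    obtain ⟨hi1, hi2⟩ := hy i hi
    obtain ⟨h01, h02⟩ := hy i0 hi0
    obtain ⟨l, hl⟩ : ∃ l, l = (dotp c (y i0) - δ) / (dotp c (y i) - δ) := ⟨_, rfl⟩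
    have hlpos : 0 < l := by
      rw [hl]; exact div_pos_of_neg_of_neg (by linarith) (by linarith)
    have hlm : l * (dotp c (y i) - δ) = dotp c (y i0) - δ := by
      rw [hl]; exact div_mul_cancel₀ _ (by linarith)
    obtain ⟨v, hv⟩ : ∃ v, v = (y i0 - z) - l • (y i - z) := ⟨_, rfl⟩
    have hvW : v ∈ Wsub c J := by
      rw [mem_Wsub]
      constructor
      · intro j hj
        simp [hv, hz0 j hj, h01 j hj, hi1 j hj]
      · have h1 := dotp_lin c (y i0 - z) (y i - z) 1 (-l)
        have h2 : v = (1:ℝ) • (y i0 - z) + (-l) • (y i - z) := by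
          rw [hv, one_smul, neg_smul, sub_eq_add_neg]
        rw [h2, h1, dotp_sub, dotp_sub, hzc]; linarith
    have h1 := hz v (hW hvW)
    have hcont : Filter.Tendsto (fun e : ℝ => e / (1 - e * l)) (nhds 0) (nhds 0) := by
      have : ContinuousAt (fun e : ℝ => e / (1 - e * l)) 0 := by
        apply ContinuousAt.div <;> first | fun_prop | simp
      simpa [ContinuousAt] using this
    have h2 := hcont.eventually h1
    have h3 : ∀ᶠ e in nhds (0:ℝ), 0 < 1 - e * l := by
      have : ContinuousAt (fun e : ℝ => 1 - e * l) 0 := by fun_prop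
      exact this.eventually (lt_mem_nhds (by simp))
    filter_upwards [nhdsWithin_le_nhds h2, nhdsWithin_le_nhds h3, self_mem_nhdsWithin]
      with e he2 he3 he0 _
    have he0 : 0 < e := he0
    refine ⟨_, he2, 1 - e * l, e * l, he3.le, by positivity, by ring, ?_⟩
    rw [smul_add, smul_smul, mul_div_cancel₀ _ he3.ne', hv]
    funext j
    simp
    ring
  have key2 := Filter.eventually_all.2 key
  obtain ⟨e, he, he0⟩ := (key2.and self_mem_nhdsWithin).exists
  have he0 : 0 < e := he0
  obtain ⟨h01, h02⟩ := hy i0 hi0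
  refine ⟨_, ?_, ?_, he⟩
  · have h := dotp_lin c z (y i0 - z) 1 e
    rw [one_smul, dotp_sub, hzc] at h
    rw [h]; nlinarith
  · intro j hj
    simp [hz0 j hj, h01 j hj]

theorem stmt3 (n t : ℕ) (hn : 2 ≤ n) (ht1 : 1 ≤ t) (htn : t ≤ n - 1)
    (P : Set (Fin n → ℝ)) (hPcube : P ⊆ cube n) (hPconv : Convex ℝ P)
    (c : Fin n → ℝ) (hc : c ≠ 0) (δ : ℝ)
    -- (i) `P_I` is full-dimensional
    (hfull : ∃ s : Fin (n + 1) → (Fin n → ℝ),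
      AffineIndependent ℝ s ∧ ∀ i, s i ∈ integerHull n P)
    -- (ii) `c·x ≥ δ` is a facet of `P_I`
    (hvalid : ∀ x ∈ integerHull n P, δ ≤ dotp c x)
    (hfacet : ∃ s : Fin n → (Fin n → ℝ),
      AffineIndependent ℝ s ∧ ∀ i, s i ∈ integerHull n P ∧ dotp c (s i) = δ)
    -- (iii) conditions on each `P^J` with `|J| = n - t`
    (hJ : ∀ J : Finset (Fin n), J.card = n - t →
      (∃ s : Fin (t + 1) → (Fin n → ℝ),
        AffineIndependent ℝ s ∧ ∀ i, s i ∈ integerHull n (restr n P J)) ∧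
      (∃ s : Fin t → (Fin n → ℝ),
        AffineIndependent ℝ s ∧ ∀ i, s i ∈ integerHull n (restr n P J) ∧ dotp c (s i) = δ) ∧
      (∃ x ∈ restr n P J, dotp c x < δ)) :
    (∃ xbar ∈ Lk n (n - t) P, dotp c xbar < δ) ∧ Lk n (n - t) P ≠ integerHull n P := by

  classical
  have hne0 : ∀ J : Finset (Fin n), J.card = n - t → ∀ i, i ∉ J →
      ∃ k, k ∉ insert i J ∧ c k ≠ 0 := by
    intro J hJc i hi
    by_contra! hcon
    obtain ⟨⟨s, hs, hs'⟩, -, ⟨x, hx, hxδ⟩⟩ := hJ J hJc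
    have hdot : ∀ x ∈ restr n P J, dotp c x = c i * x i := by
      intro x hx
      refine Finset.sum_eq_single i ?_ (by simp)
      intro k _ hk
      by_cases hkJ : k ∈ J
      · rw [hx.2 k hkJ, mul_zero]
      · rw [hcon k (by simp [hk, hkJ]), zero_mul]
    have hval : ∀ x ∈ restr n P J ∩ corners n, δ ≤ c i * x i := by
      intro x hx
      rw [← hdot x hx.1]
      exact hvalid x (subset_convexHull ℝ _ ⟨hx.1.1, hx.2⟩)
    obtain ⟨p, hp, hp0⟩ := exists_corner n t ht1 htn P J hJc i hi s hs hs' 0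
    obtain ⟨q, hq, hq1⟩ := exists_corner n t ht1 htn P J hJc i hi s hs hs' 1
    have hp1 : p i = 1 := (hp.2 i).resolve_left hp0
    have hq0 : q i = 0 := (hq.2 i).resolve_right hq1
    have h1 := hval p hp
    have h2 := hval q hq
    rw [hp1] at h1
    rw [hq0] at h2
    rw [hdot x hx] at hxδ
    obtain ⟨h3, h4⟩ := hPcube hx.1 i
    nlinarith
  have hne : ∀ K : Finset (Fin n), K.card ≤ n - t + 1 → ∃ k, k ∉ K ∧ c k ≠ 0 := by
    intro K hK
    obtain ⟨K', hKK', hK'⟩ := Finset.exists_superset_card_eq hK (by simp; omega)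
    have hpos : 0 < K'.card := by omega
    obtain ⟨i, hi⟩ := Finset.card_pos.1 hpos
    obtain ⟨k, hk, hck⟩ := hne0 (K'.erase i) (by rw [Finset.card_erase_of_mem hi]; omega) i
      (by simp)
    rw [Finset.insert_erase hi] at hk
    exact ⟨k, fun h => hk (hKK' h), hck⟩
  have hFne : ∀ J : Finset (Fin n), J.card ≤ n - t → (FJ n P c δ J).Nonempty := by
    intro J hJc
    obtain ⟨K, hJK, hK⟩ := Finset.exists_superset_card_eq hJc (by simp)
    obtain ⟨-, ⟨s, -, hs⟩, -⟩ := hJ K hK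
    exact ⟨s ⟨0, ht1⟩, FJ_anti n P c δ hJK (hs _)⟩
  have hspan : ∀ k : ℕ, ∀ J : Finset (Fin n), J.card + k = n - t →
      Wsub c J ≤ vectorSpan ℝ (FJ n P c δ J) := by
    intro k
    induction k with
    | zero =>
      intro J hJc
      have hJc : J.card = n - t := by omega
      obtain ⟨-, ⟨s, hs, hs'⟩, -⟩ := hJ J hJc
      have h1 := hs.finrank_vectorSpan (n := t - 1) (by simp; omega)
      have h2 : vectorSpan ℝ (Set.range s) ≤ vectorSpan ℝ (FJ n P c δ J) := by
        apply vectorSpan_mono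
        rintro _ ⟨a, rfl⟩
        exact hs' a
      have h3 : vectorSpan ℝ (Set.range s) ≤ Wsub c J := by
        rw [vectorSpan_def, Submodule.span_le]
        rintro w ⟨_, ⟨a, rfl⟩, _, ⟨b, rfl⟩, rfl⟩
        refine (mem_Wsub _ _ _).2 ⟨fun j hj => ?_, ?_⟩
        · simp [hull_zero n P J _ (hs' a).1 j hj, hull_zero n P J _ (hs' b).1 j hj]
        · change dotp c (s a - s b) = 0
          rw [dotp_sub, (hs' a).2, (hs' b).2, sub_self]
      obtain ⟨k, hk, hck⟩ := hne J (by omega)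
      have h4 := aux_finrank (Wsub c J) (insert k J) (by
        rintro v ⟨hv, hv'⟩ h0
        have hoff : ∀ j, j ≠ k → v j = 0 := by
          intro j hjk
          by_cases hj : j ∈ J
          · exact hv j hj
          · exact h0 j (by simp [hj, hjk])
        have h5 : dotp c v = c k * v k := by
          refine Finset.sum_eq_single k ?_ (by simp)
          intro j _ hj
          rw [hoff j hj, mul_zero]
        rw [h5] at hv'
        funext j
        by_cases hj : j = k
        · subst hj
          exact (mul_eq_zero.1 hv').resolve_left hck
        · exact hoff j hj)
      rw [Finset.card_insert_of_notMem hk, hJc] at h4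
      rw [← Submodule.eq_of_le_of_finrank_le h3 (by rw [h1]; omega)]
      exact h2
    | succ k ih =>
      intro J hJc v hv
      obtain ⟨i, hi, -⟩ := hne J (by omega)
      obtain ⟨j, hj, -⟩ := hne (insert i J) (by rw [Finset.card_insert_of_notMem hi]; omega)
      obtain ⟨m, hm, hcm⟩ := hne (insert j (insert i J)) (by
        rw [Finset.card_insert_of_notMem hj, Finset.card_insert_of_notMem hi]; omega)
      have hsub : ∀ a, a ∉ J → Wsub c (insert a J) ≤ vectorSpan ℝ (FJ n P c δ J) := by
        intro a ha
        refine (ih (insert a J) (by rw [Finset.card_insert_of_notMem ha]; omega)).trans ?_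
        exact vectorSpan_mono _ (FJ_anti n P c δ (Finset.subset_insert _ _))
      simp only [Finset.mem_insert, not_or] at hj hm
      obtain ⟨hji, hjJ⟩ := hj
      obtain ⟨hmj, hmi, hmJ⟩ := hm
      obtain ⟨w, hw⟩ : ∃ w : Fin n → ℝ,
        w = v i • Pi.single i 1 + (-(c i * v i / c m)) • Pi.single m 1 := ⟨_, rfl⟩
      have hd : ∀ a : Fin n, dotp c (Pi.single a 1) = c a := by
        intro a
        simp [dotp, Pi.single_apply]
      have hwc : dotp c w = 0 := by
        rw [hw, dotp_lin, hd, hd]; field_simp; ring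
      have hwJ : ∀ a ∈ J, w a = 0 := by
        intro a ha
        have h1 : a ≠ i := fun h => hi (h ▸ ha)
        have h2 : a ≠ m := fun h => hmJ (h ▸ ha)
        simp [hw, h1, h2]
      have hwj : w j = 0 := by
        simp [hw, hji, Ne.symm hmj]
      have hwi : w i = v i := by
        simp [hw, Ne.symm hmi]
      have e1 : w ∈ Wsub c (insert j J) := by
        refine (mem_Wsub _ _ _).2 ⟨fun a ha => ?_, hwc⟩
        rcases Finset.mem_insert.1 ha with rfl | ha
        · exact hwj
        · exact hwJ a ha
      have e2 : v - w ∈ Wsub c (insert i J) := by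
        refine (mem_Wsub _ _ _).2 ⟨fun a ha => ?_, ?_⟩
        · rcases Finset.mem_insert.1 ha with rfl | ha
          · simp [hwi]
          · simp [hwJ a ha, hv.1 a ha]
        · rw [dotp_sub, hwc, hv.2, sub_zero]
      have := Submodule.add_mem _ (hsub i hi e2) (hsub j hjJ e1)
      simpa using this
  have main : ∀ k : ℕ, ∀ J : Finset (Fin n), J.card + k = n - t →
      ∃ x ∈ Lk n k P, (∀ j ∈ J, x j = 0) ∧ dotp c x < δ := by
    intro k
    induction k with
    | zero =>
      intro J hJc
      obtain ⟨-, -, ⟨x, hx, hxδ⟩⟩ := hJ J (by omega)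
      exact ⟨x, hx.1, hx.2, hxδ⟩
    | succ k ih =>
      intro J hJc
      have hy : ∀ i : Fin n, ∃ y : Fin n → ℝ, i ∉ J →
          y ∈ Lk n k P ∧ y i = 0 ∧ (∀ j ∈ J, y j = 0) ∧ dotp c y < δ := by
        intro i
        by_cases hi : i ∈ J
        · exact ⟨0, fun h => absurd hi h⟩
        · obtain ⟨y, h1, h2, h3⟩ := ih (insert i J)
            (by rw [Finset.card_insert_of_notMem hi]; omega)
          exact ⟨y, fun _ => ⟨h1, h2 i (by simp), fun j hj => h2 j (by simp [hj]), h3⟩⟩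
      choose y hy using hy
      obtain ⟨i0, hi0, -⟩ := hne J (by omega)
      obtain ⟨u, hu, huJ, hconv⟩ := below_point (FJ n P c δ J) (FJ_convex n P c δ J)
        (hFne J (by omega)) c δ J (fun x hx => ⟨hull_zero n P J x hx.1, hx.2⟩)
        (hspan (k + 1) J hJc) y (fun i hi => (hy i hi).2.2) i0 hi0
      refine ⟨u, mem_iInter.2 fun i => ?_, huJ, hu⟩
      by_cases hi : i ∈ J
      · obtain ⟨f, hf, a, b, ha, hb, hab, rfl⟩ := hconv i0 hi0
        refine subset_convexHull ℝ _ (Or.inl ⟨?_, huJ i hi⟩)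
        refine Lk_convex n P hPconv k ?_ (hy i0 hi0).1 ha hb hab
        exact convexHull_min (fun p hp => corners_Lk n P k ⟨hp.1.1, hp.2⟩)
          (Lk_convex n P hPconv k) hf.1
      · obtain ⟨f, hf, a, b, ha, hb, hab, rfl⟩ := hconv i hi
        refine convex_convexHull ℝ _ ?_ ?_ ha hb hab
        · refine convexHull_mono ?_ hf.1
          intro p hp
          have hpL := corners_Lk n P k ⟨hp.1.1, hp.2⟩
          rcases hp.2 i with h | h
          · exact Or.inl ⟨hpL, h⟩
          · exact Or.inr ⟨hpL, h⟩
        · exact subset_convexHull ℝ _ (Or.inl ⟨(hy i hi).1, (hy i hi).2.1⟩)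
  obtain ⟨x, hx, -, hxδ⟩ := main (n - t) ∅ (by simp)
  refine ⟨⟨x, hx, hxδ⟩, fun h => ?_⟩
  rw [h] at hx
  exact absurd (hvalid x hx) (not_le.2 hxδ)
end

section
/- Let n ≥ 2 and t ∈ {1,…,n−1}. Let P ⊆ [0,1]^n be a convex set, let c ∈ ℝ^n with c ≠ 0, and let δ ∈ ℝ. For J ⊆ {1,…,n} write P^J := P ∩ {x : x_j = 0 for all j ∈ J}. Assume: (i) P_I contains n+1 affinely independent points; (ii) c·x ≥ δ for all x ∈ P_I, and {x ∈ P_I : c·x = δ} contains n affinely independent points; (iii) for every J with |J| = n−t, the set (P^J)_I contains t+1 affinely independent points and {x ∈ (P^J)_I : c·x = δ} contains t affinely independent points. Then for every J ⊆ {1,…,n} with |J| ≤ n−t, the set (P^J)_I contains n−|J|+1 affinely independent points and the set {x ∈ (P^J)_I : c·x = δ} contains n−|J| affinely independent points. -/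
open Set

lemma aux_indep {n q : ℕ} (hq : 1 ≤ q) (S : Set (Fin n → ℝ)) :
    (∃ s : Fin q → (Fin n → ℝ), AffineIndependent ℝ s ∧ ∀ i, s i ∈ S) ↔
      S.Nonempty ∧ q ≤ Module.finrank ℝ (vectorSpan ℝ S) + 1 := by
  constructor
  · rintro ⟨s, hs, hmem⟩
    refine ⟨⟨s ⟨0, hq⟩, hmem _⟩, ?_⟩
    have h1 := hs.finrank_vectorSpan (n := q - 1) (by simp; omega)
    have h2 : vectorSpan ℝ (Set.range s) ≤ vectorSpan ℝ S :=
      vectorSpan_mono ℝ (by rintro _ ⟨i, rfl⟩; exact hmem i)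
    have h3 := Submodule.finrank_mono h2
    omega
  · rintro ⟨hne, hle⟩
    obtain ⟨T, hTS, hspan, hind⟩ := exists_affineIndependent ℝ (Fin n → ℝ) S
    have hTfin : Finite T := finite_of_fin_dim_affineIndependent ℝ hind
    have : Fintype T := Fintype.ofFinite T
    have hTne : Nonempty T := by
      have h : (affineSpan ℝ T : Set (Fin n → ℝ)).Nonempty := by
        rw [hspan]; exact (affineSpan_nonempty ℝ).2 hne
      exact ((affineSpan_nonempty ℝ).1 h).to_subtype
    have hv : vectorSpan ℝ T = vectorSpan ℝ S := by
      rw [← direction_affineSpan, ← direction_affineSpan, hspan]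
    have hc := hind.finrank_vectorSpan_add_one
    rw [Subtype.range_coe, hv] at hc
    have hcard : Fintype.card (Fin q) ≤ Fintype.card T := by rw [Fintype.card_fin]; exact hle.trans hc.le
    obtain ⟨f⟩ := Function.Embedding.nonempty_of_card_le hcard
    exact ⟨fun i => (f i : Fin n → ℝ), hind.comp_embedding f, fun i => hTS (f i).2⟩

lemma aux_zero {n : ℕ} (S : Set (Fin n → ℝ)) (j : Fin n) (h : ∀ x ∈ S, x j = 0) :
    ∀ v ∈ vectorSpan ℝ S, v j = 0 := by
  intro v hv
  have : vectorSpan ℝ S ≤ LinearMap.ker (LinearMap.proj (R := ℝ) (φ := fun _ : Fin n => ℝ) j) := by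
    rw [vectorSpan_def, Submodule.span_le]
    rintro _ ⟨x, hx, y, hy, rfl⟩
    simp [h x hx, h y hy]
  simpa using this hv

lemma aux_step {n m : ℕ} (K : Finset (Fin n)) (S : Set (Fin n → ℝ)) (T : Fin n → Set (Fin n → ℝ))
    (hS : ∀ j ∈ K, ∀ x ∈ S, x j = 0) (hT : ∀ j ∉ K, ∀ x ∈ T j, x j = 0)
    (hTS : ∀ j ∉ K, T j ⊆ S) (hm : 1 ≤ m) (hK : ∃ j, j ∉ K)
    (hr : ∀ j ∉ K, m ≤ Module.finrank ℝ (vectorSpan ℝ (T j))) :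
    m + 1 ≤ Module.finrank ℝ (vectorSpan ℝ S) := by
  by_contra hlt
  push Not at hlt
  have heq : ∀ j ∉ K, vectorSpan ℝ (T j) = vectorSpan ℝ S := fun j hj =>
    Submodule.eq_of_le_of_finrank_le (vectorSpan_mono ℝ (hTS j hj)) (by have := hr j hj; omega)
  have hbot : vectorSpan ℝ S = ⊥ := by
    rw [eq_bot_iff]
    intro v hv
    rw [Submodule.mem_bot]
    funext j
    by_cases hj : j ∈ K
    · exact aux_zero S j (hS j hj) v hv
    · exact aux_zero (T j) j (hT j hj) v (by rw [heq j hj]; exact hv)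
  obtain ⟨j, hj⟩ := hK
  have := hr j hj
  rw [heq j hj, hbot, finrank_bot] at this
  omega

lemma aux_two {n : ℕ} (S : Set (Fin n → ℝ)) (i j : Fin n) (hij : i ≠ j)
    (hi : ∀ x ∈ S, x i = 0) (hj : ∀ x ∈ S, x j = 0) :
    Module.finrank ℝ (vectorSpan ℝ S) + 2 ≤ n := by
  let f : (Fin n → ℝ) →ₗ[ℝ] (ℝ × ℝ) := (LinearMap.proj i).prod (LinearMap.proj j)
  have hle : vectorSpan ℝ S ≤ LinearMap.ker f := by
    intro v hv
    simp [f, LinearMap.mem_ker, aux_zero S i hi v hv, aux_zero S j hj v hv]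
  have hsurj : LinearMap.range f = ⊤ := by
    rw [LinearMap.range_eq_top]
    rintro ⟨a, b⟩
    exact ⟨fun k => if k = i then a else b, by simp [f, hij.symm]⟩
  have h1 := LinearMap.finrank_range_add_finrank_ker f
  rw [hsurj, finrank_top] at h1
  have h2 := Submodule.finrank_mono hle
  simp at h1
  omega

lemma hull_zero_s4 {n : ℕ} (X : Set (Fin n → ℝ)) (j : Fin n) (h : ∀ x ∈ X, x j = 0) :
    ∀ x ∈ convexHull ℝ X, x j = 0 := by
  intro x hx
  have hc : Convex ℝ {x : Fin n → ℝ | x j = 0} := by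
    intro x hx y hy a b _ _ _
    simp only [mem_ofPred_eq] at *
    simp [hx, hy]
  exact convexHull_min (s := X) h hc hx

lemma hull_nonneg {n : ℕ} (P : Set (Fin n → ℝ)) (j : Fin n) :
    ∀ x ∈ integerHull n P, 0 ≤ x j := by
  intro x hx
  have hc : Convex ℝ {x : Fin n → ℝ | 0 ≤ x j} := by
    intro x hx y hy a b ha hb _
    simp only [mem_ofPred_eq] at *
    simp only [Pi.add_apply, Pi.smul_apply, smul_eq_mul]
    positivity
  refine convexHull_min (s := P ∩ corners n) ?_ hc hx
  rintro y ⟨-, hy⟩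
  rcases hy j with h | h <;> simp [h]

lemma hull_restr_zero {n : ℕ} (P : Set (Fin n → ℝ)) (K : Finset (Fin n)) (j : Fin n) (hj : j ∈ K) :
    ∀ x ∈ integerHull n (restr n P K), x j = 0 :=
  hull_zero_s4 _ j (fun _ hx => hx.1.2 j hj)

lemma hull_restr_mono {n : ℕ} (P : Set (Fin n → ℝ)) {K L : Finset (Fin n)} (h : K ⊆ L) :
    integerHull n (restr n P L) ⊆ integerHull n (restr n P K) :=
  convexHull_mono (fun _ hx => ⟨⟨hx.1.1, fun j hj => hx.1.2 j (h hj)⟩, hx.2⟩)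

lemma unit_mem {n : ℕ} (P : Set (Fin n → ℝ)) (i : Fin n)
    (h : ∃ s : Fin 2 → (Fin n → ℝ), AffineIndependent ℝ s ∧
      ∀ k, s k ∈ integerHull n (restr n P (Finset.univ.erase i))) :
    Pi.single i (1 : ℝ) ∈ P := by
  by_contra hnot
  obtain ⟨s, hs, hmem⟩ := h
  have hz : ∀ x ∈ integerHull n (restr n P (Finset.univ.erase i)), x = 0 := by
    intro x hx
    funext j
    refine hull_zero_s4 _ j ?_ x hx
    rintro y ⟨⟨hyP, hy0⟩, hyc⟩
    by_cases hj : j = i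
    · subst hj
      rcases hyc j with h | h
      · exact h
      · exfalso
        apply hnot
        convert hyP using 1
        funext k
        by_cases hk : k = j
        · subst hk; simp [h]
        · rw [hy0 k (by simp [hk])]; simp [hk]
    · exact hy0 j (by simp [hj])
  have : s 0 = s 1 := by rw [hz _ (hmem 0), hz _ (hmem 1)]
  exact absurd (hs.injective this) (by decide)

lemma dotp_single {n : ℕ} (c : Fin n → ℝ) (i : Fin n) : dotp c (Pi.single i 1) = c i := by
  simp [dotp, Pi.single_apply]

theorem stmt4 (n t : ℕ) (hn : 2 ≤ n) (ht1 : 1 ≤ t) (htn : t ≤ n - 1)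
    (P : Set (Fin n → ℝ)) (hPcube : P ⊆ cube n) (hPconv : Convex ℝ P)
    (c : Fin n → ℝ) (hc : c ≠ 0) (δ : ℝ)
    -- (i) `P_I` is full-dimensional
    (hfull : ∃ s : Fin (n + 1) → (Fin n → ℝ),
      AffineIndependent ℝ s ∧ ∀ i, s i ∈ integerHull n P)
    -- (ii) `c·x ≥ δ` is a facet of `P_I`
    (hvalid : ∀ x ∈ integerHull n P, δ ≤ dotp c x)
    (hfacet : ∃ s : Fin n → (Fin n → ℝ),
      AffineIndependent ℝ s ∧ ∀ i, s i ∈ integerHull n P ∧ dotp c (s i) = δ)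
    -- (iii) conditions on each `P^J` with `|J| = n - t`
    (hJ : ∀ J : Finset (Fin n), J.card = n - t →
      (∃ s : Fin (t + 1) → (Fin n → ℝ),
        AffineIndependent ℝ s ∧ ∀ i, s i ∈ integerHull n (restr n P J)) ∧
      (∃ s : Fin t → (Fin n → ℝ),
        AffineIndependent ℝ s ∧ ∀ i, s i ∈ integerHull n (restr n P J) ∧ dotp c (s i) = δ)) :
    ∀ J : Finset (Fin n), J.card ≤ n - t →
      (∃ s : Fin (n - J.card + 1) → (Fin n → ℝ),
        AffineIndependent ℝ s ∧ ∀ i, s i ∈ integerHull n (restr n P J)) ∧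
      (∃ s : Fin (n - J.card) → (Fin n → ℝ),
        AffineIndependent ℝ s ∧ ∀ i, s i ∈ integerHull n (restr n P J) ∧ dotp c (s i) = δ) := by
  have key : ∀ d : ℕ, ∀ J : Finset (Fin n), J.card + d = n - t →
      (∃ s : Fin (n - J.card + 1) → (Fin n → ℝ),
        AffineIndependent ℝ s ∧ ∀ i, s i ∈ integerHull n (restr n P J)) ∧
      (∃ s : Fin (n - J.card) → (Fin n → ℝ),
        AffineIndependent ℝ s ∧ ∀ i, s i ∈ integerHull n (restr n P J) ∧ dotp c (s i) = δ) := by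
    intro d
    induction d with
    | zero =>
      intro J hcard
      have := hJ J (by omega)
      have e : n - J.card = t := by omega
      rw [e]; exact this
    | succ d ih =>
      intro K hcard
      have hins : ∀ j ∉ K, (insert j K).card = K.card + 1 := fun j hj =>
        Finset.card_insert_of_notMem hj
      have hlt : 1 < (Kᶜ).card := by rw [Finset.card_compl]; simp; omega
      obtain ⟨i0, hi0, j0, hj0, hij0⟩ := Finset.one_lt_card.1 hlt
      rw [Finset.mem_compl] at hi0 hj0
      constructor
      · rw [aux_indep (by omega)]
        have hA : ∀ j ∉ K, _ ∧ _ := fun j hj =>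
          (aux_indep (by omega) _).1 (ih (insert j K) (by rw [hins j hj]; omega)).1
        refine ⟨(hA i0 hi0).1.mono (hull_restr_mono P (Finset.subset_insert _ _)), ?_⟩
        have := aux_step (m := n - K.card - 1) K (integerHull n (restr n P K))
          (fun j => integerHull n (restr n P (insert j K)))
          (fun j hj => hull_restr_zero P K j hj)
          (fun j hj => hull_restr_zero P _ j (Finset.mem_insert_self _ _))
          (fun j hj => hull_restr_mono P (Finset.subset_insert _ _)) (by omega) ⟨i0, hi0⟩
          (fun j hj => by have := (hA j hj).2; rw [hins j hj] at this; omega)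
        omega
      · let F : Finset (Fin n) → Set (Fin n → ℝ) := fun L =>
          {x | x ∈ integerHull n (restr n P L) ∧ dotp c x = δ}
        have hFm : ∀ j, F (insert j K) ⊆ F K := fun j x hx =>
          ⟨hull_restr_mono P (Finset.subset_insert _ _) hx.1, hx.2⟩
        change ∃ s : Fin (n - K.card) → (Fin n → ℝ), AffineIndependent ℝ s ∧ ∀ i, s i ∈ F K
        rw [aux_indep (by omega)]
        have hB : ∀ j ∉ K, (F (insert j K)).Nonempty ∧ _ := fun j hj =>
          (aux_indep (by rw [hins j hj]; omega) (F (insert j K))).1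
            (ih (insert j K) (by rw [hins j hj]; omega)).2
        have hne : (F K).Nonempty := (hB i0 hi0).1.mono (hFm i0)
        refine ⟨hne, ?_⟩
        by_cases h2 : n - K.card = 2
        · by_contra hcon
          have hr0 : Module.finrank ℝ (vectorSpan ℝ (F K)) = 0 := by omega
          have hbot : vectorSpan ℝ (F K) = ⊥ := Submodule.finrank_eq_zero.1 hr0
          have hsub : (F K).Subsingleton := by
            intro x hx y hy
            have h := vsub_mem_vectorSpan ℝ hx hy
            rw [hbot, Submodule.mem_bot, vsub_eq_sub, sub_eq_zero] at h
            exact h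
          have ht : t = 1 := by omega
          obtain ⟨p, hp⟩ := hne
          have hp0 : p = 0 := by
            funext j
            by_cases hj : j ∈ K
            · exact hull_restr_zero P K j hj p hp.1
            · obtain ⟨x, hx⟩ := (hB j hj).1
              rw [hsub hp (hFm j hx)]
              exact hull_restr_zero P _ j (Finset.mem_insert_self _ _) x hx.1
          have hδ : δ = 0 := by rw [← hp.2, hp0]; simp [dotp]
          have hunit : ∀ i, Pi.single i (1 : ℝ) ∈ P := by
            intro i
            have h := (hJ (Finset.univ.erase i) (by simp [ht])).1
            subst ht
            exact unit_mem P i h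
          have hcorner : ∀ i : Fin n, (Pi.single i (1 : ℝ) : Fin n → ℝ) ∈ corners n := by
            intro i k
            by_cases hk : k = i
            · subst hk; simp
            · simp [hk]
          have hcnn : ∀ i, 0 ≤ c i := by
            intro i
            have h := hvalid _ (subset_convexHull ℝ _ ⟨hunit i, hcorner i⟩)
            rwa [dotp_single, hδ] at h
          have hno : ∀ i ∉ K, c i ≠ 0 := by
            intro i hi h0
            have hm : (Pi.single i (1 : ℝ) : Fin n → ℝ) ∈ F K := by
              refine ⟨subset_convexHull ℝ _ ⟨⟨hunit i, ?_⟩, hcorner i⟩, ?_⟩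
              · intro j hj
                have : j ≠ i := fun e => hi (e ▸ hj)
                simp [this]
              · rw [dotp_single, h0, hδ]
            have h := congrFun (hsub hm hp) i
            rw [hp0] at h
            simp at h
          have hzero : ∀ i, c i ≠ 0 →
              ∀ x ∈ {x | x ∈ integerHull n P ∧ dotp c x = δ}, x i = 0 := by
            rintro i hi x ⟨hx, hx0⟩
            rw [hδ, dotp, Finset.sum_eq_zero_iff_of_nonneg
              (fun k _ => mul_nonneg (hcnn k) (hull_nonneg P k x hx))] at hx0
            exact (mul_eq_zero.1 (hx0 i (Finset.mem_univ i))).resolve_left hi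
          have h3 := aux_two _ i0 j0 hij0 (hzero i0 (hno i0 hi0)) (hzero j0 (hno j0 hj0))
          have h4 := ((aux_indep (by omega) {x | x ∈ integerHull n P ∧ dotp c x = δ}).1 hfacet).2
          omega
        · have := aux_step (m := n - K.card - 2) K (F K) (fun j => F (insert j K))
            (fun j hj x hx => hull_restr_zero P K j hj x hx.1)
            (fun j hj x hx => hull_restr_zero P _ j (Finset.mem_insert_self _ _) x hx.1)
            (fun j hj => hFm j) (by omega) ⟨i0, hi0⟩
            (fun j hj => by have := (hB j hj).2; rw [hins j hj] at this; omega)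
          omega
  intro J hle
  exact key (n - t - J.card) J (by omega)
end

section
/- Let n ≥ 1, let k ∈ {1,…,n}, let π be a permutation of {1,…,n}, and let 𝒯 := 𝒯^{π,k} be the skewed k-tree. Then: (i) the map v ↦ J¹_v is a bijection from the leaves of 𝒯 onto the family {J ⊆ {1,…,n} : |J| ≤ k}; in particular 𝒯 has exactly ∑_{i=0}^{k} binom(n,i) leaves; and (ii) every leaf v of 𝒯 satisfies |J¹_v| = k or J⁰_v ∪ J¹_v = {1,…,n}. -/
open Set

/-- Branching trees over the index set `Fin n`. -/
inductive BTree (n : ℕ) : Type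
  | leaf : BTree n
  | node : Fin n → BTree n → BTree n → BTree n

/-- The list of leaves of a tree, each recorded as the pair `(J⁰, J¹)` of sets of indices
fixed to `0` resp. `1` on the path from the root to the leaf. -/
def leavesJ {n : ℕ} : BTree n → Finset (Fin n) → Finset (Fin n) →
    List (Finset (Fin n) × Finset (Fin n))
  | .leaf, J0, J1 => [(J0, J1)]
  | .node j t0 t1, J0, J1 => leavesJ t0 (insert j J0) J1 ++ leavesJ t1 J0 (insert j J1)

/-- The skewed `k`-tree construction: `skew k ℓ c` branches on the indices of `ℓ` in order,
stopping (with a leaf) whenever the counter of variables fixed to one reaches `k`. -/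
def skew {n : ℕ} (k : ℕ) : List (Fin n) → ℕ → BTree n
  | [], _ => .leaf
  | j :: l, c => if c < k then .node j (skew k l c) (skew k l (c + 1)) else .leaf

/-- The skewed `k`-tree `𝒯^{π,k}` for a permutation `π` of the indices. -/
def skewTree (n k : ℕ) (π : Equiv.Perm (Fin n)) : BTree n :=
  skew k ((List.finRange n).map π) 0

theorem skew_mem {n : ℕ} (k : ℕ) (l : List (Fin n)) : ∀ (c : ℕ) (J0 J1 : Finset (Fin n)),
    l.Nodup → (∀ j ∈ l, j ∉ J1) → J1.card = c → c ≤ k → ∀ J : Finset (Fin n),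
    (J ∈ (leavesJ (skew k l c) J0 J1).map Prod.snd ↔
      J1 ⊆ J ∧ (∀ x ∈ J, x ∈ J1 ∨ x ∈ l) ∧ J.card ≤ k) := by
  induction l with
  | nil =>
    intro c J0 J1 _ _ hc hk J
    simp only [skew, leavesJ, List.map_cons, List.map_nil, List.mem_singleton, List.not_mem_nil,
      or_false]
    constructor
    · rintro rfl
      exact ⟨Finset.Subset.refl _, fun x hx => hx, by omega⟩
    · rintro ⟨h1, h2, -⟩
      exact Finset.Subset.antisymm h2 h1
  | cons j l ih =>
    intro c J0 J1 hl hd hc hk J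
    have hj : j ∉ J1 := hd j (by simp)
    have hjl : j ∉ l := (List.nodup_cons.1 hl).1
    have hl' := (List.nodup_cons.1 hl).2
    by_cases h : c < k
    · simp only [skew, h, if_true, leavesJ, List.map_append, List.mem_append]
      rw [ih c (insert j J0) J1 hl' (fun x hx => hd x (by simp [hx])) hc hk J,
        ih (c + 1) J0 (insert j J1) hl' (by
          intro x hx
          rw [Finset.mem_insert, not_or]
          exact ⟨fun e => hjl (e ▸ hx), hd x (by simp [hx])⟩)
          (by rw [Finset.card_insert_of_notMem hj, hc]) h J]
      simp only [Finset.insert_subset_iff, Finset.mem_insert, List.mem_cons]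
      constructor
      · rintro (⟨h1, h2, h3⟩ | ⟨⟨h0, h1⟩, h2, h3⟩)
        · exact ⟨h1, fun x hx => by have := h2 x hx; tauto, h3⟩
        · exact ⟨h1, fun x hx => by have := h2 x hx; tauto, h3⟩
      · rintro ⟨h1, h2, h3⟩
        by_cases hJ : j ∈ J
        · right
          exact ⟨⟨hJ, h1⟩, fun x hx => by have := h2 x hx; tauto, h3⟩
        · left
          refine ⟨h1, fun x hx => ?_, h3⟩
          have hne : x ≠ j := fun e => hJ (e ▸ hx)
          have := h2 x hx
          tauto
    · simp only [skew, h, if_false, leavesJ, List.map_cons, List.map_nil, List.mem_singleton]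
      constructor
      · rintro rfl
        exact ⟨Finset.Subset.refl _, fun x hx => Or.inl hx, by omega⟩
      · rintro ⟨h1, -, h3⟩
        exact (Finset.eq_of_subset_of_card_le h1 (by omega)).symm

theorem skew_nodup {n : ℕ} (k : ℕ) (l : List (Fin n)) : ∀ (c : ℕ) (J0 J1 : Finset (Fin n)),
    l.Nodup → (∀ j ∈ l, j ∉ J1) → J1.card = c → c ≤ k →
    ((leavesJ (skew k l c) J0 J1).map Prod.snd).Nodup := by
  induction l with
  | nil => intros; simp [skew, leavesJ]
  | cons j l ih =>
    intro c J0 J1 hl hd hc hk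
    have hj : j ∉ J1 := hd j (by simp)
    have hjl : j ∉ l := (List.nodup_cons.1 hl).1
    have hl' := (List.nodup_cons.1 hl).2
    by_cases h : c < k
    · have hd0 : ∀ x ∈ l, x ∉ J1 := fun x hx => hd x (by simp [hx])
      have hd1 : ∀ x ∈ l, x ∉ insert j J1 := by
        intro x hx
        rw [Finset.mem_insert, not_or]
        exact ⟨fun e => hjl (e ▸ hx), hd0 x hx⟩
      have hc1 : (insert j J1).card = c + 1 := by rw [Finset.card_insert_of_notMem hj, hc]
      simp only [skew, h, if_true, leavesJ, List.map_append]
      refine List.Nodup.append (ih c _ J1 hl' hd0 hc hk) (ih (c + 1) J0 _ hl' hd1 hc1 h) ?_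
      intro J h0 h1
      rw [skew_mem k l c _ J1 hl' hd0 hc hk] at h0
      rw [skew_mem k l (c + 1) J0 _ hl' hd1 hc1 h] at h1
      have := h0.2.1 j (h1.1 (Finset.mem_insert_self j J1))
      tauto
    · simp [skew, h, leavesJ]

theorem skew_full {n : ℕ} (k : ℕ) (l : List (Fin n)) : ∀ (c : ℕ) (J0 J1 : Finset (Fin n)),
    l.Nodup → (∀ j ∈ l, j ∉ J1) → J1.card = c → c ≤ k →
    ∀ p ∈ leavesJ (skew k l c) J0 J1,
      p.2.card = k ∨ ∀ x, x ∈ J0 ∨ x ∈ J1 ∨ x ∈ l → x ∈ p.1 ∪ p.2 := by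
  induction l with
  | nil =>
    intro c J0 J1 _ _ _ _ p hp
    simp only [skew, leavesJ, List.mem_singleton] at hp
    subst hp
    right
    simp
  | cons j l ih =>
    intro c J0 J1 hl hd hc hk p hp
    have hj : j ∉ J1 := hd j (by simp)
    have hjl : j ∉ l := (List.nodup_cons.1 hl).1
    have hl' := (List.nodup_cons.1 hl).2
    by_cases h : c < k
    · have hd0 : ∀ x ∈ l, x ∉ J1 := fun x hx => hd x (by simp [hx])
      have hd1 : ∀ x ∈ l, x ∉ insert j J1 := by
        intro x hx
        rw [Finset.mem_insert, not_or]
        exact ⟨fun e => hjl (e ▸ hx), hd0 x hx⟩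
      have hc1 : (insert j J1).card = c + 1 := by rw [Finset.card_insert_of_notMem hj, hc]
      simp only [skew, h, if_true, leavesJ, List.mem_append] at hp
      rcases hp with hp | hp
      · refine (ih c _ J1 hl' hd0 hc hk p hp).imp id fun H x hx => H x ?_
        simp only [Finset.mem_insert, List.mem_cons] at hx ⊢
        tauto
      · refine (ih (c + 1) J0 _ hl' hd1 hc1 h p hp).imp id fun H x hx => H x ?_
        simp only [Finset.mem_insert, List.mem_cons] at hx ⊢
        tauto
    · simp only [skew, h, if_false, leavesJ, List.mem_singleton] at hp
      subst hp
      left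
      show J1.card = k
      omega

theorem stmt6 (n k : ℕ) (hn : 1 ≤ n) (hk1 : 1 ≤ k) (hkn : k ≤ n) (π : Equiv.Perm (Fin n)) :
    -- (i) `v ↦ J¹_v` is a bijection from the leaves onto `{J : |J| ≤ k}` ...
    ((leavesJ (skewTree n k π) ∅ ∅).map Prod.snd).Nodup ∧
    (∀ J : Finset (Fin n),
      J ∈ (leavesJ (skewTree n k π) ∅ ∅).map Prod.snd ↔ J.card ≤ k) ∧
    -- ... in particular the number of leaves is `∑_{i=0}^{k} C(n,i)` ...
    (leavesJ (skewTree n k π) ∅ ∅).length = ∑ i ∈ Finset.range (k + 1), Nat.choose n i ∧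
    -- (ii) every leaf satisfies `|J¹_v| = k` or `J⁰_v ∪ J¹_v = [n]`.
    ∀ p ∈ leavesJ (skewTree n k π) ∅ ∅, p.2.card = k ∨ p.1 ∪ p.2 = Finset.univ := by
  have hl : ((List.finRange n).map π).Nodup := (List.nodup_finRange n).map π.injective
  have hall : ∀ x, x ∈ (List.finRange n).map π := fun x =>
    List.mem_map.2 ⟨π.symm x, List.mem_finRange _, by simp⟩
  have hnd := skew_nodup k _ 0 ∅ ∅ hl (by simp) (by simp) (Nat.zero_le k)
  have hmem : ∀ J : Finset (Fin n),
      J ∈ (leavesJ (skewTree n k π) ∅ ∅).map Prod.snd ↔ J.card ≤ k := by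
    intro J
    rw [skewTree, skew_mem k _ 0 ∅ ∅ hl (by simp) (by simp) (Nat.zero_le k)]
    exact ⟨fun h => h.2.2, fun h => ⟨Finset.empty_subset _, fun x _ => Or.inr (hall x), h⟩⟩
  refine ⟨hnd, hmem, ?_, ?_⟩
  · have h1 : ((leavesJ (skewTree n k π) ∅ ∅).map Prod.snd).toFinset =
        (Finset.range (k + 1)).biUnion
          fun i => Finset.powersetCard i (Finset.univ : Finset (Fin n)) := by
      ext J
      rw [List.mem_toFinset, hmem]
      simp [Finset.mem_powersetCard, Nat.lt_succ_iff]
    have h2 := List.toFinset_card_of_nodup hnd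
    change ((leavesJ (skewTree n k π) ∅ ∅).map Prod.snd).toFinset.card =
      ((leavesJ (skewTree n k π) ∅ ∅).map Prod.snd).length at h2
    rw [List.length_map] at h2
    rw [← h2, h1, Finset.card_biUnion]
    · simp
    · intro i _ j _ hij
      exact Finset.pairwise_disjoint_powersetCard _ hij
  · intro p hp
    refine (skew_full k _ 0 ∅ ∅ hl (by simp) (by simp) (Nat.zero_le k) p hp).imp id fun H => ?_
    ext x
    simp only [Finset.mem_univ, iff_true]
    exact H x (Or.inr (Or.inr (hall x)))
end

section
/- Let n ≥ 1, let k ∈ {1,…,n}, let ε ∈ (0,1), and let P ⊆ [0,1]^n be a set such that ∑_{i=1}^{n} x_i ≤ k − ε for every x ∈ P. Then for every permutation π of {1,…,n}, 𝒯^{π,k}(P) = P_I. -/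
open Set

/-- The atom of a leaf `p = (J⁰, J¹)`. -/
def atom (n : ℕ) (P : Set (Fin n → ℝ)) (p : Finset (Fin n) × Finset (Fin n)) :
    Set (Fin n → ℝ) :=
  P ∩ {x | (∀ j ∈ p.1, x j = 0) ∧ ∀ j ∈ p.2, x j = 1}

/-- `𝒯(P)`: the convex hull of the union of the atoms of the leaves of `𝒯`. -/
def treeSet (n : ℕ) (T : BTree n) (P : Set (Fin n → ℝ)) : Set (Fin n → ℝ) :=
  convexHull ℝ (⋃ p ∈ leavesJ T ∅ ∅, atom n P p)

theorem exists_leaf {n : ℕ} (x : Fin n → ℝ) (hx : x ∈ corners n) (T : BTree n) :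
    ∀ J0 J1 : Finset (Fin n), (∀ j ∈ J0, x j = 0) → (∀ j ∈ J1, x j = 1) →
      ∃ p ∈ leavesJ T J0 J1, (∀ j ∈ p.1, x j = 0) ∧ ∀ j ∈ p.2, x j = 1 := by
  induction T with
  | leaf => intro J0 J1 h0 h1; exact ⟨(J0, J1), by simp [leavesJ], h0, h1⟩
  | node j t0 t1 ih0 ih1 =>
    intro J0 J1 h0 h1
    rcases hx j with h | h
    · obtain ⟨p, hp, hq⟩ := ih0 (insert j J0) J1 (by simpa [h] using h0) h1
      exact ⟨p, by simp [leavesJ, hp], hq⟩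
    · obtain ⟨p, hp, hq⟩ := ih1 J0 (insert j J1) h0 (by simpa [h] using h1)
      exact ⟨p, by simp [leavesJ, hp], hq⟩

theorem skew_leaf {n : ℕ} (k : ℕ) (l : List (Fin n)) :
    ∀ (c : ℕ) (J0 J1 : Finset (Fin n)), l.Nodup → (∀ j ∈ l, j ∉ J1) →
      (∀ j, j ∈ l ∨ j ∈ J0 ∨ j ∈ J1) → J1.card = c →
      ∀ p ∈ leavesJ (skew k l c) J0 J1, (∀ j, j ∈ p.1 ∨ j ∈ p.2) ∨ k ≤ p.2.card := by
  induction l with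
  | nil =>
    intro c J0 J1 _ _ hall _ p hp
    simp only [skew, leavesJ, List.mem_singleton] at hp
    subst hp
    left
    simpa using hall
  | cons a l ih =>
    intro c J0 J1 hnd hdis hall hc p hp
    rw [List.nodup_cons] at hnd
    by_cases h : c < k
    · simp only [skew, h, if_true, leavesJ, List.mem_append] at hp
      rcases hp with hp | hp
      · refine ih c _ _ hnd.2 (fun j hj => hdis j (by simp [hj])) (fun j => ?_) hc p hp
        have := hall j
        simp only [List.mem_cons, Finset.mem_insert] at this ⊢
        tauto
      · refine ih (c + 1) _ _ hnd.2 (fun j hj => ?_) (fun j => ?_) ?_ p hp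
        · rw [Finset.mem_insert, not_or]
          exact ⟨fun e => hnd.1 (e ▸ hj), hdis j (by simp [hj])⟩
        · have := hall j
          simp only [List.mem_cons, Finset.mem_insert] at this ⊢
          tauto
        · rw [Finset.card_insert_of_notMem (hdis a (by simp)), hc]
    · simp only [skew, h, if_false, leavesJ, List.mem_singleton] at hp
      subst hp
      right
      simp only
      omega

theorem stmt7 (n k : ℕ) (hn : 1 ≤ n) (hk1 : 1 ≤ k) (hkn : k ≤ n) (ε : ℝ)
    (hε : 0 < ε ∧ ε < 1) (P : Set (Fin n → ℝ)) (hPcube : P ⊆ cube n)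
    (hknap : ∀ x ∈ P, ∑ i, x i ≤ (k : ℝ) - ε) (π : Equiv.Perm (Fin n)) :
    treeSet n (skewTree n k π) P = integerHull n P := by
  unfold treeSet integerHull
  congr 1
  ext x
  simp only [mem_iUnion, exists_prop]
  constructor
  · rintro ⟨p, hp, hxP, h0, h1⟩
    refine ⟨hxP, fun i => ?_⟩
    rcases skew_leaf k _ 0 ∅ ∅ ((List.nodup_finRange n).map π.injective) (by simp)
      (fun j => Or.inl (List.mem_map.2 ⟨π.symm j, by simp, by simp⟩)) (by simp) p hp with h | h
    · exact (h i).imp (h0 i) (h1 i)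
    · exfalso
      have e1 : ∑ i ∈ p.2, x i = p.2.card := by
        rw [Finset.sum_congr rfl h1]; simp
      have e2 : ∑ i ∈ p.2, x i ≤ ∑ i, x i :=
        Finset.sum_le_sum_of_subset_of_nonneg (Finset.subset_univ _)
          (fun i _ _ => (hPcube hxP i).1)
      have e3 : (k : ℝ) ≤ p.2.card := by exact_mod_cast h
      have := hknap x hxP
      linarith [hε.1]
  · rintro ⟨hxP, hc⟩
    obtain ⟨p, hp, hq⟩ := exists_leaf x hc (skewTree n k π) ∅ ∅ (by simp) (by simp)
    exact ⟨p, hp, hxP, hq⟩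
end

section
/- Let G be a simple graph on vertex set {1,…,n} (n ≥ 1) with clique number k, let P_G be its fractional clique polytope, and let J ⊆ {1,…,n} with |J| = k. If J is not a clique of G, then P_G ∩ {x : x_v = 1 for all v ∈ J} = ∅. If J is a clique of G, then P_G ∩ {x : x_v = 1 for all v ∈ J} = {χ_J}, where χ_J is the 0/1 indicator vector of J. -/
open Set

/-- The fractional clique polytope of a graph `G` on vertex set `Fin n`. -/
def fracClique (n : ℕ) (G : SimpleGraph (Fin n)) : Set (Fin n → ℝ) :=
  {x | (∀ v, 0 ≤ x v) ∧ ∀ u v : Fin n, u ≠ v → ¬ G.Adj u v → x u + x v ≤ 1}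

theorem stmt8 (n k : ℕ) (hn : 1 ≤ n) (G : SimpleGraph (Fin n))
    -- `k` is the clique number of `G`
    (hk_ex : ∃ K : Finset (Fin n), G.IsNClique k K)
    (hk_max : ∀ K : Finset (Fin n), G.IsClique (K : Set (Fin n)) → K.card ≤ k)
    (J : Finset (Fin n)) (hJ : J.card = k) :
    (¬ G.IsClique (J : Set (Fin n)) →
      fracClique n G ∩ {x | ∀ v ∈ J, x v = 1} = ∅) ∧
    (G.IsClique (J : Set (Fin n)) →
      fracClique n G ∩ {x | ∀ v ∈ J, x v = 1} =
        {fun v => if v ∈ J then (1 : ℝ) else 0}) := by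
  constructor
  · intro hnc
    rw [Set.eq_empty_iff_forall_notMem]
    rintro x ⟨⟨_, h1⟩, h2⟩
    apply hnc
    intro u hu v hv huv
    by_contra hadj
    have h := h1 u v huv hadj
    rw [h2 u hu, h2 v hv] at h
    norm_num at h
  · intro hc
    ext x
    simp only [Set.mem_singleton_iff]
    constructor
    · rintro ⟨⟨h0, h1⟩, h2⟩
      funext v
      by_cases hv : v ∈ J
      · rw [if_pos hv]
        exact h2 v hv
      · rw [if_neg hv]
        have hex : ∃ u ∈ J, ¬ G.Adj v u := by
          by_contra hcon
          push Not at hcon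
          have hcl : G.IsClique ((insert v J : Finset (Fin n)) : Set (Fin n)) := by
            rw [Finset.coe_insert]
            exact hc.insert (fun b hb _ => hcon b hb)
          have hle := hk_max _ hcl
          rw [Finset.card_insert_of_notMem hv] at hle
          omega
        obtain ⟨u, hu, hadj⟩ := hex
        have hne : v ≠ u := fun h => hv (h ▸ hu)
        have h := h1 v u hne hadj
        rw [h2 u hu] at h
        have h' := h0 v
        linarith
    · rintro rfl
      refine ⟨⟨fun v => ?_, fun u v huv hadj => ?_⟩, fun v hv => ?_⟩
      · dsimp only
        split_ifs <;> norm_num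
      · dsimp only
        by_cases hu : u ∈ J
        · by_cases hv : v ∈ J
          · exact absurd (hc hu hv huv) hadj
          · simp [hu, hv]
        · by_cases hv : v ∈ J <;> simp [hu, hv]
      · exact if_pos hv
end

section
/- Let n ≥ 1, let S ⊆ {0,1}^n, and let P_S be the no-good polytope of S. Let J⁰, J¹ ⊆ {1,…,n} be disjoint and let F := {x ∈ [0,1]^n : x_j = 0 for all j ∈ J⁰ and x_j = 1 for all j ∈ J¹}. If F ∩ S = ∅, then F ⊆ P_S; in particular P_S ∩ F = F = conv(F ∩ {0,1}^n). -/
open Set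

/-- The no-good polytope of a set `S` of 0/1 points. -/
def noGood (n : ℕ) (S : Set (Fin n → ℝ)) : Set (Fin n → ℝ) :=
  {x ∈ cube n | ∀ s ∈ S,
    (1 : ℝ) / 2 ≤ ∑ j, (if s j = 0 then x j else 1 - x j)}

theorem hull_coord_s10 (a b : Prop) (hab : ¬ (a ∧ b)) :
    convexHull ℝ {v : ℝ | (v = 0 ∨ v = 1) ∧ (a → v = 0) ∧ (b → v = 1)}
      = {v : ℝ | (0 ≤ v ∧ v ≤ 1) ∧ (a → v = 0) ∧ (b → v = 1)} := by
  by_cases ha : a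
  · have hb : ¬ b := fun hb => hab ⟨ha, hb⟩
    have h1 : {v : ℝ | (v = 0 ∨ v = 1) ∧ (a → v = 0) ∧ (b → v = 1)} = {0} := by
      ext v; simp only [Set.mem_ofPred_eq, Set.mem_singleton_iff]; tauto
    rw [h1, convexHull_singleton]
    ext v
    simp only [Set.mem_ofPred_eq, Set.mem_singleton_iff]
    constructor
    · rintro rfl; exact ⟨by norm_num, fun _ => rfl, fun h => absurd h hb⟩
    · rintro ⟨-, h, -⟩; exact h ha
  · by_cases hb : b
    · have h1 : {v : ℝ | (v = 0 ∨ v = 1) ∧ (a → v = 0) ∧ (b → v = 1)} = {1} := by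
        ext v; simp only [Set.mem_ofPred_eq, Set.mem_singleton_iff]; tauto
      rw [h1, convexHull_singleton]
      ext v
      simp only [Set.mem_ofPred_eq, Set.mem_singleton_iff]
      constructor
      · rintro rfl; exact ⟨by norm_num, fun h => absurd h ha, fun _ => rfl⟩
      · rintro ⟨-, -, h⟩; exact h hb
    · have h1 : {v : ℝ | (v = 0 ∨ v = 1) ∧ (a → v = 0) ∧ (b → v = 1)} = {0, 1} := by
        ext v; simp [ha, hb]
      rw [h1, convexHull_pair, segment_eq_Icc zero_le_one]
      ext v; simp [ha, hb]

theorem stmt10 (n : ℕ) (hn : 1 ≤ n) (S : Set (Fin n → ℝ)) (hS : S ⊆ corners n)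
    (J0 J1 : Finset (Fin n)) (hdisj : Disjoint J0 J1)
    (F : Set (Fin n → ℝ))
    (hF : F = {x ∈ cube n | (∀ j ∈ J0, x j = 0) ∧ ∀ j ∈ J1, x j = 1})
    (hFS : F ∩ S = ∅) :
    F ⊆ noGood n S ∧ noGood n S ∩ F = F ∧ F = convexHull ℝ (F ∩ corners n) := by
  have key : F ⊆ noGood n S := by
    intro x hx
    have hx' := hx
    rw [hF] at hx'
    obtain ⟨hc, h0, h1⟩ := hx'
    refine ⟨hc, fun s hs => ?_⟩
    have hsF : s ∉ F := fun h => by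
      have : s ∈ F ∩ S := ⟨h, hs⟩
      rw [hFS] at this
      exact this
    have hsc := hS hs
    have hex : ∃ j, (if s j = 0 then x j else 1 - x j) = 1 := by
      by_contra hne
      push Not at hne
      apply hsF
      rw [hF]
      refine ⟨fun i => ?_, fun j hj => ?_, fun j hj => ?_⟩
      · rcases hsc i with h | h <;> rw [h] <;> norm_num
      · by_contra h
        apply hne j
        rw [if_neg h, h0 j hj, sub_zero]
      · rcases hsc j with h | h
        · exact absurd (by rw [if_pos h, h1 j hj]) (hne j)
        · exact h
    obtain ⟨j, hj⟩ := hex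
    have := Finset.single_le_sum (f := fun j => if s j = 0 then x j else 1 - x j)
      (fun i _ => by
        have := hc i
        split_ifs <;> linarith [this.1, this.2]) (Finset.mem_univ j)
    rw [hj] at this
    linarith
  refine ⟨key, Set.inter_eq_right.mpr key, ?_⟩
  have hV : F ∩ corners n = Set.univ.pi
      (fun j => {v : ℝ | (v = 0 ∨ v = 1) ∧ (j ∈ J0 → v = 0) ∧ (j ∈ J1 → v = 1)}) := by
    ext x
    rw [hF, Set.mem_univ_pi]
    constructor
    · rintro ⟨⟨_, h0, h1⟩, hc⟩ j
      exact ⟨hc j, h0 j, h1 j⟩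
    · intro h
      refine ⟨⟨fun i => ?_, fun j => (h j).2.1, fun j => (h j).2.2⟩, fun j => (h j).1⟩
      rcases (h i).1 with h | h <;> rw [h] <;> norm_num
  rw [hV, convexHull_pi]
  ext x
  rw [hF, Set.mem_univ_pi]
  have hd : ∀ j, ¬ (j ∈ J0 ∧ j ∈ J1) := fun j h => Finset.disjoint_left.mp hdisj h.1 h.2
  constructor
  · rintro ⟨hc, h0, h1⟩ j
    rw [hull_coord_s10 _ _ (hd j)]
    exact ⟨hc j, h0 j, h1 j⟩
  · intro h
    have h' := fun j => (hull_coord_s10 _ _ (hd j)) ▸ h j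
    exact ⟨fun j => (h' j).1, fun j => (h' j).2.1, fun j => (h' j).2.2⟩
end

section
/- Let n ≥ 2 and let P := {x ∈ [0,1]^n : ∑_{j=1}^{n} x_j ≥ 1/2} (the no-good polytope of S = {0}). Then P_I = {x ∈ [0,1]^n : ∑_{j=1}^{n} x_j ≥ 1}, and there exists a point x̄ ∈ L^{n−1}(P) with ∑_{j=1}^{n} x̄_j < 1; in particular L^{n−1}(P) ≠ P_I. -/
open Set

lemma e_mem_corner (n : ℕ) (i : Fin n) :
    (Pi.single i (1:ℝ) : Fin n → ℝ) ∈ {x ∈ cube n | (1 : ℝ) / 2 ≤ ∑ j, x j} ∩ corners n := by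
  refine ⟨⟨fun j => ?_, ?_⟩, fun j => ?_⟩
  · by_cases h : j = i
    · subst h; simp
    · simp [h]
  · simp; norm_num
  · by_cases h : j = i
    · subst h; simp
    · simp [h]

lemma hull_sum_one (n : ℕ) (x : Fin n → ℝ) (hx : x ∈ cube n) (hs : ∑ j, x j = 1) :
    x ∈ integerHull n {x ∈ cube n | (1 : ℝ) / 2 ≤ ∑ j, x j} := by
  have h := (convex_convexHull ℝ ({x ∈ cube n | (1 : ℝ) / 2 ≤ ∑ j, x j} ∩ corners n)).sum_mem
    (t := Finset.univ) (w := x) (z := fun i => (Pi.single i (1:ℝ) : Fin n → ℝ))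
    (fun i _ => (hx i).1) hs (fun i _ => subset_convexHull ℝ _ (e_mem_corner n i))
  have e : ∑ i, x i • (Pi.single i (1:ℝ) : Fin n → ℝ) = x := by
    ext j
    simp [Finset.sum_apply, Pi.single_apply]
  rw [e] at h
  exact h

lemma sum_update (n : ℕ) (x : Fin n → ℝ) (i : Fin n) (a : ℝ) :
    ∑ j, Function.update x i a j = ∑ j, x j + (a - x i) := by
  rw [Finset.sum_update_of_mem (Finset.mem_univ i),
    ← Finset.add_sum_erase Finset.univ x (Finset.mem_univ i), Finset.sdiff_singleton_eq_erase]
  ring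

lemma update_cube (n : ℕ) (x : Fin n → ℝ) (hx : x ∈ cube n) (i : Fin n) (a : ℝ)
    (h0 : 0 ≤ a) (h1 : a ≤ 1) : Function.update x i a ∈ cube n := by
  intro j
  by_cases h : j = i
  · subst h; simp [h0, h1]
  · simpa [h] using hx j

lemma frac_lt (n : ℕ) (x : Fin n → ℝ) (i : Fin n) (hi : x i ≠ 0 ∧ x i ≠ 1) (a : ℝ)
    (ha : a = 0 ∨ a = 1) :
    (Finset.univ.filter fun j => Function.update x i a j ≠ 0 ∧ Function.update x i a j ≠ 1).card
      < (Finset.univ.filter fun j => x j ≠ 0 ∧ x j ≠ 1).card := by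
  apply Finset.card_lt_card
  rw [Finset.ssubset_iff_of_subset]
  · refine ⟨i, by simpa using hi, ?_⟩
    simp
    tauto
  · intro j
    by_cases h : j = i
    · subst h; simp; tauto
    · simp [h]

lemma seg (n : ℕ) (S : Set (Fin n → ℝ)) (hS : Convex ℝ S) (x : Fin n → ℝ) (i : Fin n) (a : ℝ)
    (ha : a ≤ x i) (hx1 : x i < 1) (h0 : Function.update x i a ∈ S)
    (h1 : Function.update x i 1 ∈ S) : x ∈ S := by
  have hp : 0 < 1 - a := by linarith
  have h := hS h0 h1 (a := (1 - x i) / (1 - a)) (b := (x i - a) / (1 - a))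
    (by apply div_nonneg <;> linarith) (by apply div_nonneg <;> linarith) (by field_simp; ring)
  convert h using 1
  ext j
  by_cases hj : j = i
  · subst hj; simp; field_simp; ring
  · simp [hj]; field_simp; ring

lemma hull_ge (n : ℕ) : ∀ (m : ℕ) (x : Fin n → ℝ), x ∈ cube n → (1:ℝ) ≤ ∑ j, x j →
    (Finset.univ.filter fun j => x j ≠ 0 ∧ x j ≠ 1).card = m →
    x ∈ integerHull n {x ∈ cube n | (1 : ℝ) / 2 ≤ ∑ j, x j} := by
  intro m
  induction m using Nat.strong_induction_on with
  | _ m ih =>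
    intro x hx hs hm
    by_cases hc : ∃ i, x i ≠ 0 ∧ x i ≠ 1
    · obtain ⟨i, hi⟩ := hc
      have hx0 := (hx i).1
      have hx1 : x i < 1 := lt_of_le_of_ne (hx i).2 hi.2
      have up : Function.update x i 1 ∈ integerHull n {x ∈ cube n | (1 : ℝ) / 2 ≤ ∑ j, x j} :=
        ih _ (hm ▸ frac_lt n x i hi 1 (Or.inr rfl)) _
          (update_cube n x hx i 1 zero_le_one le_rfl) (by rw [sum_update]; linarith) rfl
      rcases le_total (∑ j, x j - 1) (x i) with h | h
      · refine seg n _ (convex_convexHull ℝ _) x i (x i - (∑ j, x j - 1)) (by linarith) hx1 ?_ up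
        exact hull_sum_one n _ (update_cube n x hx i _ (by linarith) (by linarith))
          (by rw [sum_update]; ring)
      · refine seg n _ (convex_convexHull ℝ _) x i 0 hx0 hx1 ?_ up
        exact ih _ (hm ▸ frac_lt n x i hi 0 (Or.inl rfl)) _
          (update_cube n x hx i 0 le_rfl zero_le_one) (by rw [sum_update]; linarith) rfl
    · refine subset_convexHull ℝ _ ⟨⟨hx, by linarith⟩, fun i => ?_⟩
      by_contra h
      exact hc ⟨i, by tauto⟩

lemma hull_le (n : ℕ) : integerHull n {x ∈ cube n | (1 : ℝ) / 2 ≤ ∑ j, x j} ⊆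
    {x ∈ cube n | (1 : ℝ) ≤ ∑ j, x j} := by
  apply convexHull_min
  · rintro x ⟨⟨hx, hs⟩, hc⟩
    refine ⟨hx, ?_⟩
    by_contra! hlt
    have : ∀ i, x i = 0 := by
      intro i
      rcases hc i with h | h
      · exact h
      · have := Finset.single_le_sum (f := x) (fun j _ => (hx j).1) (Finset.mem_univ i)
        linarith
    simp [this] at hs
    linarith
  · rintro x ⟨hx, hxs⟩ y ⟨hy, hys⟩ a b ha hb hab
    refine ⟨fun i => ?_, ?_⟩
    · have h1 := hx i
      have h2 := hy i
      simp only [Pi.add_apply, Pi.smul_apply, smul_eq_mul]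
      constructor
      · have := mul_nonneg ha h1.1
        have := mul_nonneg hb h2.1
        linarith
      · nlinarith
    · simp only [Pi.add_apply, Pi.smul_apply, smul_eq_mul, Finset.sum_add_distrib,
        ← Finset.mul_sum]
      nlinarith

lemma e_mem_Lk (n : ℕ) (i : Fin n) (k : ℕ) :
    (Pi.single i (1:ℝ) : Fin n → ℝ) ∈ Lk n k {x ∈ cube n | (1 : ℝ) / 2 ≤ ∑ j, x j} := by
  induction k with
  | zero => exact (e_mem_corner n i).1
  | succ k ih =>
    refine mem_iInter.2 fun j => subset_convexHull ℝ _ ?_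
    rcases (e_mem_corner n i).2 j with h | h
    · exact Or.inl ⟨ih, h⟩
    · exact Or.inr ⟨ih, h⟩

noncomputable def pT (n : ℕ) (T : Finset (Fin n)) : Fin n → ℝ :=
  fun j => if j ∈ T then 1 / ((T.card : ℝ) + 1) else 0

lemma pT_sum (n : ℕ) (T : Finset (Fin n)) : ∑ j, pT n T j = T.card / ((T.card : ℝ) + 1) := by
  simp [pT, div_eq_mul_inv]

lemma pT_mem (n k : ℕ) : ∀ T : Finset (Fin n), k + 1 ≤ T.card →
    pT n T ∈ Lk n k {x ∈ cube n | (1 : ℝ) / 2 ≤ ∑ j, x j} := by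
  induction k with
  | zero =>
    intro T hT
    have h1 : (1:ℝ) ≤ T.card := by exact_mod_cast hT
    refine ⟨fun j => ?_, ?_⟩
    · unfold pT
      split_ifs
      · exact ⟨by positivity, by rw [div_le_one] <;> linarith⟩
      · simp
    · rw [pT_sum, div_le_div_iff₀] <;> linarith
  | succ k ih =>
    intro T hT
    refine mem_iInter.2 fun i => ?_
    by_cases hi : i ∈ T
    · have hcard : (T.erase i).card + 1 = T.card := Finset.card_erase_add_one hi
      have hcr : (T.card : ℝ) = (T.erase i).card + 1 := by exact_mod_cast hcard.symm
      have hA := ih (T.erase i) (by omega)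
      set c : ℝ := 1 / ((T.card : ℝ) + 1) with hc
      have hc1 : c ≤ 1 := by
        rw [hc, div_le_one] <;> have := Nat.cast_nonneg (α := ℝ) T.card <;> linarith
      have h := convex_convexHull ℝ
        ((Lk n k {x ∈ cube n | (1 : ℝ) / 2 ≤ ∑ j, x j} ∩ {x | x i = 0}) ∪
          (Lk n k {x ∈ cube n | (1 : ℝ) / 2 ≤ ∑ j, x j} ∩ {x | x i = 1}))
        (subset_convexHull ℝ _ (Or.inl ⟨hA, by simp [pT]⟩))
        (subset_convexHull ℝ _ (Or.inr ⟨e_mem_Lk n i k, by simp⟩))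
        (a := 1 - c) (b := c) (by linarith) (by positivity) (by ring)
      convert h using 1
      ext j
      have hpos : (0:ℝ) ≤ (T.erase i).card := Nat.cast_nonneg _
      by_cases hj : j = i
      · subst hj; simp [pT, hi, hc]
      · by_cases hjT : j ∈ T
        · simp only [pT, hj, hjT, hc, hcr, Pi.add_apply, Pi.smul_apply, smul_eq_mul,
            Finset.mem_erase, ne_eq, not_false_eq_true, and_self, if_true, Pi.single_apply,
            if_false, mul_zero, add_zero]
          field_simp
          ring
        · simp [pT, hj, hjT]
    · exact subset_convexHull ℝ _ (Or.inl ⟨ih T (by omega), by simp [pT, hi]⟩)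

theorem stmt11 (n : ℕ) (hn : 2 ≤ n)
    (P : Set (Fin n → ℝ)) (hP : P = {x ∈ cube n | (1 : ℝ) / 2 ≤ ∑ j, x j}) :
    integerHull n P = {x ∈ cube n | (1 : ℝ) ≤ ∑ j, x j} ∧
    (∃ xbar ∈ Lk n (n - 1) P, ∑ j, xbar j < 1) ∧
    Lk n (n - 1) P ≠ integerHull n P := by
  subst hP
  have h2 : ∃ xbar ∈ Lk n (n - 1) {x ∈ cube n | (1 : ℝ) / 2 ≤ ∑ j, x j}, ∑ j, xbar j < 1 := by
    refine ⟨pT n Finset.univ, pT_mem n (n-1) _ (by simp; omega), ?_⟩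
    rw [pT_sum, div_lt_one (by positivity)]
    linarith
  refine ⟨Subset.antisymm (hull_le n) fun x hx => hull_ge n _ x hx.1 hx.2 rfl, h2, fun h => ?_⟩
  obtain ⟨x, hx, hs⟩ := h2
  rw [h] at hx
  have := (hull_le n hx).2
  linarith
end

section
/- For every m ≥ 1, L(Q_m) = ∅, where Q_m ⊆ [0,1]^{3m} is the fractional stable set polytope of m disjoint triangles intersected with the half-space ∑_v y_v ≥ m + 1/2. -/
open Set

/-- The `a`-th vertex of the `i`-th triangle, as an index in `Fin (3 * m)`. -/
def tidx (m : ℕ) (i : Fin m) (a : Fin 3) : Fin (3 * m) :=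
  ⟨3 * i.val + a.val, by have := i.isLt; have := a.isLt; omega⟩

/-- `Q_m`: the fractional stable set polytope of `m` disjoint triangles, intersected with the
half-space `∑ y_v ≥ m + 1/2`. -/
def Qm (m : ℕ) : Set (Fin (3 * m) → ℝ) :=
  {y | (∀ v, 0 ≤ y v ∧ y v ≤ 1) ∧
       (∀ i : Fin m,
          y (tidx m i 0) + y (tidx m i 1) ≤ 1 ∧
          y (tidx m i 0) + y (tidx m i 2) ≤ 1 ∧
          y (tidx m i 1) + y (tidx m i 2) ≤ 1) ∧
       (m : ℝ) + 1 / 2 ≤ ∑ v, y v}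

theorem sum_tidx (m : ℕ) (y : Fin (3 * m) → ℝ) :
    ∑ v, y v = ∑ i : Fin m, (y (tidx m i 0) + y (tidx m i 1) + y (tidx m i 2)) := by
  rw [← Equiv.sum_comp (finProdFinEquiv.trans (finCongr (Nat.mul_comm m 3))) y,
    Fintype.sum_prod_type]
  refine Finset.sum_congr rfl fun i _ => ?_
  have h : ∀ a : Fin 3,
      (finProdFinEquiv.trans (finCongr (Nat.mul_comm m 3))) (i, a) = tidx m i a := by
    intro a
    apply Fin.ext
    simp [tidx, finProdFinEquiv]
    omega
  simp only [h, Fin.sum_univ_three]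

theorem stmt12 (m : ℕ) (hm : 1 ≤ m) : Lop (3 * m) (Qm m) = ∅ := by
  rw [Set.eq_empty_iff_forall_notMem]
  intro x hx
  have hx' := Set.mem_iInter.1 hx
  have htri : ∀ i : Fin m, x (tidx m i 0) + x (tidx m i 1) + x (tidx m i 2) ≤ 1 := by
    intro i
    have hc : Convex ℝ {y : Fin (3 * m) → ℝ |
        y (tidx m i 0) + y (tidx m i 1) + y (tidx m i 2) ≤ 1} := by
      intro y hy z hz a b ha hb hab
      simp only [Set.mem_setOf_eq, Pi.add_apply, Pi.smul_apply, smul_eq_mul] at *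
      nlinarith
    refine convexHull_min ?_ hc (hx' (tidx m i 0))
    rintro y (⟨⟨_, h, _⟩, h0⟩ | ⟨⟨_, h, _⟩, h0⟩) <;>
    · have := h i
      simp only [Set.mem_setOf_eq] at *
      linarith
  have hsum : (m : ℝ) + 1 / 2 ≤ ∑ v, x v := by
    have hc : Convex ℝ {y : Fin (3 * m) → ℝ | (m : ℝ) + 1 / 2 ≤ ∑ v, y v} := by
      intro y hy z hz a b ha hb hab
      simp only [Set.mem_setOf_eq, Pi.add_apply, Pi.smul_apply, smul_eq_mul,
        Finset.sum_add_distrib, ← Finset.mul_sum] at *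
      have h1 := mul_le_mul_of_nonneg_left hy ha
      have h2 := mul_le_mul_of_nonneg_left hz hb
      have h3 : (a + b) * ((m : ℝ) + 1 / 2) = (m : ℝ) + 1 / 2 := by rw [hab, one_mul]
      linarith
    refine convexHull_min ?_ hc (hx' (tidx m ⟨0, hm⟩ 0))
    rintro y (⟨⟨_, _, h⟩, _⟩ | ⟨⟨_, _, h⟩, _⟩) <;> exact h
  rw [sum_tidx] at hsum
  have hle := Finset.sum_le_sum fun i (_ : i ∈ Finset.univ) => htri i
  simp only [Finset.sum_const, Finset.card_univ, Fintype.card_fin, nsmul_eq_mul, mul_one] at hle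
  linarith
end

section
/- Let m ≥ 1 and n := 3m + 1. Let P := conv( {(y,0) : y ∈ {0,1}^{3m}} ∪ {(y,1) : y ∈ Q_m} ) ⊆ [0,1]^n, where the last coordinate is x_n. Then L^2(P) = P_I = [0,1]^{3m} × {0}. -/
open Set

theorem convex_lin_le {n : ℕ} (f : (Fin n → ℝ) →ₗ[ℝ] ℝ) (c : ℝ) : Convex ℝ {x | f x ≤ c} :=
  convex_halfSpace_le f.isLinear c

theorem Lop_subset {n : ℕ} (P C : Set (Fin n → ℝ)) (i : Fin n) (hC : Convex ℝ C)
    (h0 : ∀ x ∈ P, x i = 0 → x ∈ C) (h1 : ∀ x ∈ P, x i = 1 → x ∈ C) : Lop n P ⊆ C := by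
  intro x hx
  have := mem_iInter.1 hx i
  refine convexHull_min ?_ hC this
  rintro y (⟨h, h'⟩ | ⟨h, h'⟩)
  · exact h0 y h h'
  · exact h1 y h h'

theorem corners_Lop {n : ℕ} (P : Set (Fin n → ℝ)) : P ∩ corners n ⊆ Lop n P := by
  rintro x ⟨hx, hc⟩
  refine mem_iInter.2 fun i => subset_convexHull ℝ _ ?_
  rcases hc i with h | h
  · exact Or.inl ⟨hx, h⟩
  · exact Or.inr ⟨hx, h⟩

theorem convex_Lop {n : ℕ} (P : Set (Fin n → ℝ)) : Convex ℝ (Lop n P) :=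
  convex_iInter fun _ => convex_convexHull ℝ _

theorem convex_cube0 (n : ℕ) : Convex ℝ {x ∈ cube (n + 1) | x (Fin.last n) = 0} := by
  rintro x ⟨hx, hx0⟩ y ⟨hy, hy0⟩ a b ha hb hab
  refine ⟨fun i => ?_, by simp [hx0, hy0]⟩
  obtain ⟨h1, h2⟩ := hx i
  obtain ⟨h3, h4⟩ := hy i
  simp only [Pi.add_apply, Pi.smul_apply, smul_eq_mul]
  constructor
  · positivity
  · nlinarith

theorem cube0_subset (n : ℕ) : {x ∈ cube (n + 1) | x (Fin.last n) = 0} ⊆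
    convexHull ℝ ((fun y : Fin n → ℝ => (Fin.snoc y (0 : ℝ) : Fin (n + 1) → ℝ)) '' corners n) := by
  rintro x ⟨hx, hx0⟩
  have hsub : (univ.pi fun i : Fin (n + 1) => if i = Fin.last n then ({0} : Set ℝ) else {0, 1}) ⊆
      (fun y : Fin n → ℝ => (Fin.snoc y (0 : ℝ) : Fin (n + 1) → ℝ)) '' corners n := by
    intro z hz
    refine ⟨fun i => z i.castSucc, fun i => ?_, ?_⟩
    · have := hz i.castSucc (mem_univ _)
      simpa [Fin.castSucc_ne_last] using this
    · have h0 := hz (Fin.last n) (mem_univ _)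
      simp at h0
      funext i
      refine Fin.lastCases ?_ (fun j => ?_) i
      · simp [h0]
      · simp
  refine convexHull_mono hsub ?_
  rw [convexHull_pi]
  intro i _
  by_cases h : i = Fin.last n
  · subst h
    simp [hx0]
  · have := hx i
    simp only [h, if_false, convexHull_pair, segment_eq_Icc (zero_le_one' ℝ)]
    exact this

theorem stmt13 (m : ℕ) (hm : 1 ≤ m)
    (P : Set (Fin (3 * m + 1) → ℝ))
    (hP : P = convexHull ℝ
      ((fun y : Fin (3 * m) → ℝ => Fin.snoc y (0 : ℝ)) '' corners (3 * m) ∪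
       (fun y : Fin (3 * m) → ℝ => Fin.snoc y (1 : ℝ)) '' Qm m)) :
    Lk (3 * m + 1) 2 P = integerHull (3 * m + 1) P ∧
    integerHull (3 * m + 1) P =
      {x ∈ cube (3 * m + 1) | x (Fin.last (3 * m)) = 0} := by
  -- valid inequalities for P
  have hcube : P ⊆ cube (3 * m + 1) := by
    rw [hP]
    refine convexHull_min ?_ ?_
    · rintro _ (⟨y, hy, rfl⟩ | ⟨y, hy, rfl⟩) i
      · refine Fin.lastCases ?_ (fun j => ?_) i
        · simp
        · rcases hy j with h | h <;> simp [h]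
      · refine Fin.lastCases ?_ (fun j => ?_) i
        · simp
        · simpa using hy.1 j
    · rintro x hx y hy a b ha hb hab i
      obtain ⟨h1, h2⟩ := hx i
      obtain ⟨h3, h4⟩ := hy i
      simp only [Pi.add_apply, Pi.smul_apply, smul_eq_mul]
      constructor
      · positivity
      · nlinarith
  have hpair : ∀ (u v : Fin (3 * m)), (∀ y ∈ Qm m, y u + y v ≤ 1) →
      ∀ x ∈ P, x u.castSucc + x v.castSucc + x (Fin.last _) ≤ 2 := by
    intro u v huv x hx
    have : P ⊆ {x | ((LinearMap.proj u.castSucc : (Fin (3 * m + 1) → ℝ) →ₗ[ℝ] ℝ) + (LinearMap.proj v.castSucc : (Fin (3 * m + 1) → ℝ) →ₗ[ℝ] ℝ)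
        + (LinearMap.proj (Fin.last (3 * m)) : (Fin (3 * m + 1) → ℝ) →ₗ[ℝ] ℝ) : (Fin (3 * m + 1) → ℝ) →ₗ[ℝ] ℝ) x ≤ 2} := by
      rw [hP]
      refine convexHull_min ?_ (convex_lin_le _ _)
      rintro _ (⟨y, hy, rfl⟩ | ⟨y, hy, rfl⟩)
      · rcases hy u with h | h <;> rcases hy v with h' | h' <;> simp [h, h'] <;> norm_num
      · have := huv y hy
        simp
        linarith
    simpa using this hx
  have hsum : ∀ x ∈ P, ((m : ℝ) + 1 / 2) * x (Fin.last _) ≤ ∑ v : Fin (3 * m), x v.castSucc := by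
    intro x hx
    have : P ⊆ {x | (((m : ℝ) + 1 / 2) • (LinearMap.proj (Fin.last (3 * m)) : (Fin (3 * m + 1) → ℝ) →ₗ[ℝ] ℝ)
        - ∑ v : Fin (3 * m), (LinearMap.proj v.castSucc : (Fin (3 * m + 1) → ℝ) →ₗ[ℝ] ℝ) :
          (Fin (3 * m + 1) → ℝ) →ₗ[ℝ] ℝ) x ≤ 0} := by
      rw [hP]
      refine convexHull_min ?_ (convex_lin_le _ _)
      rintro _ (⟨y, hy, rfl⟩ | ⟨y, hy, rfl⟩)
      · simp
        refine Finset.sum_nonneg fun v _ => ?_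
        rcases hy v with h | h <;> simp [h]
      · have := hy.2.2
        simp at this ⊢
        linarith
    have := this hx
    simp at this ⊢
    linarith
  have hPc : Convex ℝ P := by rw [hP]; exact convex_convexHull ℝ _
  have hLP : Lop _ P ⊆ P :=
    Lop_subset P P (Fin.last _) hPc (fun x hx _ => hx) (fun x hx _ => hx)
  have hL3 : ∀ i : Fin m, ∀ x ∈ Lop _ P, x (tidx m i 0).castSucc + x (tidx m i 1).castSucc
      + x (tidx m i 2).castSucc + 2 * x (Fin.last _) ≤ 3 := by
    intro i x hx
    have : Lop _ P ⊆ {x | ((LinearMap.proj (tidx m i 0).castSucc : (Fin (3 * m + 1) → ℝ) →ₗ[ℝ] ℝ)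
        + (LinearMap.proj (tidx m i 1).castSucc : (Fin (3 * m + 1) → ℝ) →ₗ[ℝ] ℝ) + (LinearMap.proj (tidx m i 2).castSucc : (Fin (3 * m + 1) → ℝ) →ₗ[ℝ] ℝ)
        + (2 : ℝ) • (LinearMap.proj (Fin.last (3 * m)) : (Fin (3 * m + 1) → ℝ) →ₗ[ℝ] ℝ) :
          (Fin (3 * m + 1) → ℝ) →ₗ[ℝ] ℝ) x ≤ 3} := by
      refine Lop_subset P _ (tidx m i 0).castSucc (convex_lin_le _ _) ?_ ?_
      · intro x hx h
        have h1 := hpair (tidx m i 1) (tidx m i 2) (fun y hy => (hy.2.1 i).2.2) x hx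
        have h2 := (hcube hx (Fin.last _)).2
        simp [h]
        linarith
      · intro x hx h
        have h1 := hpair (tidx m i 0) (tidx m i 1) (fun y hy => (hy.2.1 i).1) x hx
        have h2 := hpair (tidx m i 0) (tidx m i 2) (fun y hy => (hy.2.1 i).2.1) x hx
        simp [h]
        linarith
    simpa using this hx
  have hne : ∀ x ∈ Lop _ P, x (Fin.last (3 * m)) ≠ 1 := by
    intro x hx h1
    have h2 := hsum x (hLP hx)
    rw [sum_tidx m (fun v => x v.castSucc), h1] at h2
    have h3 : ∑ i : Fin m, (x (tidx m i 0).castSucc + x (tidx m i 1).castSucc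
        + x (tidx m i 2).castSucc) ≤ ∑ i : Fin m, (1 : ℝ) := by
      refine Finset.sum_le_sum fun i _ => ?_
      have := hL3 i x hx
      linarith
    simp at h3 h2
    linarith
  have hA : integerHull (3 * m + 1) P ⊆ Lk (3 * m + 1) 2 P := by
    refine convexHull_min ?_ (convex_Lop _)
    intro x hx
    exact corners_Lop _ ⟨corners_Lop _ hx, hx.2⟩
  have hB : Lk (3 * m + 1) 2 P ⊆ {x ∈ cube (3 * m + 1) | x (Fin.last (3 * m)) = 0} := by
    refine Lop_subset (Lop _ P) _ (Fin.last _) (convex_cube0 _) ?_ ?_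
    · intro x hx h
      exact ⟨hcube (hLP hx), h⟩
    · intro x hx h
      exact absurd h (hne x hx)
  have hC : {x ∈ cube (3 * m + 1) | x (Fin.last (3 * m)) = 0} ⊆ integerHull (3 * m + 1) P := by
    refine (cube0_subset _).trans (convexHull_mono ?_)
    intro x hx
    refine ⟨?_, ?_⟩
    · rw [hP]
      exact subset_convexHull ℝ _ (Or.inl hx)
    · obtain ⟨y, hy, rfl⟩ := hx
      intro i
      refine Fin.lastCases ?_ (fun j => ?_) i
      · simp
      · simpa using hy j
  exact ⟨(hB.trans hC).antisymm hA, (hA.trans hB).antisymm hC⟩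
end

section
/- Let n ≥ 7 with n ≡ 1 (mod 6), and let N := 2^{(n−1)/6}. There exists a polytope P ⊆ [0,1]^n (the convex hull of finitely many points) such that L^2(P) = P_I and P_I ⊊ ⋂_{Q ∈ S_N(P)} Q; that is, there exists a point x ∈ P \ P_I that belongs to every branch-and-bound relaxation of P with at most 2^{(n−1)/6} leaves, while lift-and-project retrieves the integer hull in two rounds. -/
open Set

/-- `S_N(P)`: the family of branch-and-bound relaxations of `P` with at most `N` leaves. -/
def SN (n : ℕ) : ℕ → Set (Fin n → ℝ) → Set (Set (Fin n → ℝ))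
  | 0, _ => ∅
  | N + 1, P => {P} ∪ {Q | ∃ j : Fin n, ∃ N₀ N₁ : ℕ, ∃ _ : 1 ≤ N₀, ∃ _ : 1 ≤ N₁,
      ∃ _ : N₀ + N₁ ≤ N + 1,
      ∃ A, ∃ _ : A ∈ SN n N₀ (P ∩ {x | x j = 0}),
      ∃ B, ∃ _ : B ∈ SN n N₁ (P ∩ {x | x j = 1}),
      Q = convexHull ℝ (A ∪ B)}
  termination_by N => N
  decreasing_by all_goals omega

namespace Aux

variable {K n : ℕ}

/-- The fractional points: asked groups (those in `S`) carry `(0,1)` or `(1,0)`,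
the other groups carry `(3/4,3/4)`; the last coordinate is `1`. -/
noncomputable def w (e : Option (Fin K × Bool) ≃ Fin n) (S : Finset (Fin K)) (τ : Fin K → Bool) :
    Fin n → ℝ := fun i =>
  match e.symm i with
  | none => 1
  | some (g, c) => if g ∈ S then (if τ g = c then 1 else 0) else 3 / 4

theorem w_none (e : Option (Fin K × Bool) ≃ Fin n) (S τ) : w e S τ (e none) = 1 := by
  simp [w]

theorem w_some (e : Option (Fin K × Bool) ≃ Fin n) (S τ g c) :
    w e S τ (e (some (g, c))) = if g ∈ S then (if τ g = c then 1 else 0) else 3 / 4 := by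
  simp [w]

def V0 (e : Option (Fin K × Bool) ≃ Fin n) : Set (Fin n → ℝ) :=
  Set.univ.pi (fun i => if i = e none then {0} else {0, 1})

def V1 (e : Option (Fin K × Bool) ≃ Fin n) : Set (Fin n → ℝ) :=
  {x | ∃ S τ, S ≠ Finset.univ ∧ x = w e S τ}

def PP (e : Option (Fin K × Bool) ≃ Fin n) : Set (Fin n → ℝ) := convexHull ℝ (V0 e ∪ V1 e)

theorem V0_finite (e : Option (Fin K × Bool) ≃ Fin n) : (V0 e).Finite := by
  apply Set.Finite.pi
  intro i
  split_ifs
  · exact Set.finite_singleton _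
  · exact (Set.finite_singleton _).insert _

theorem V1_finite (e : Option (Fin K × Bool) ≃ Fin n) : (V1 e).Finite := by
  apply (Set.finite_range (fun p : Finset (Fin K) × (Fin K → Bool) => w e p.1 p.2)).subset
  rintro x ⟨S, τ, -, rfl⟩
  exact ⟨(S, τ), rfl⟩

theorem mem_V0 (e : Option (Fin K × Bool) ≃ Fin n) (x) :
    x ∈ V0 e ↔ x (e none) = 0 ∧ ∀ g c, x (e (some (g, c))) = 0 ∨ x (e (some (g, c))) = 1 := by
  constructor
  · intro h
    refine ⟨?_, fun g c => ?_⟩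
    · simpa using h (e none) trivial
    · simpa using h (e (some (g, c))) trivial
  · rintro ⟨h1, h2⟩ i -
    obtain ⟨o, rfl⟩ := e.surjective i
    rcases o with _ | ⟨g, c⟩
    · simpa using h1
    · simpa using h2 g c

theorem hull_V0 (e : Option (Fin K × Bool) ≃ Fin n) (x : Fin n → ℝ) (h0 : x (e none) = 0)
    (hx : x ∈ cube n) : x ∈ convexHull ℝ (V0 e) := by
  unfold V0
  rw [convexHull_pi]
  intro i _
  dsimp only
  split_ifs with h
  · subst h; simp [h0]
  · rw [convexHull_pair, segment_eq_Icc zero_le_one]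
    exact hx i

theorem convex_cube : Convex ℝ (cube n) := by
  have : cube n = Set.univ.pi (fun _ => Set.Icc (0:ℝ) 1) := by
    ext x; simp [cube, Pi.le_def, forall_and]
  rw [this]
  exact convex_pi (fun _ _ => convex_Icc 0 1)

theorem V0_corner (e : Option (Fin K × Bool) ≃ Fin n) : V0 e ⊆ corners n := by
  intro x hx i
  rw [mem_V0] at hx
  obtain ⟨o, rfl⟩ := e.surjective i
  rcases o with _ | ⟨g, c⟩
  · exact Or.inl hx.1
  · exact hx.2 g c

theorem corners_cube : corners n ⊆ cube n := by
  intro x hx i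
  rcases hx i with h | h <;> rw [h] <;> norm_num

theorem w_cube (e : Option (Fin K × Bool) ≃ Fin n) (S τ) : w e S τ ∈ cube n := by
  intro i
  obtain ⟨o, rfl⟩ := e.surjective i
  rcases o with _ | ⟨g, c⟩
  · rw [w_none]; norm_num
  · rw [w_some]; split_ifs <;> norm_num

theorem PP_cube (e : Option (Fin K × Bool) ≃ Fin n) : PP e ⊆ cube n := by
  apply convexHull_min _ convex_cube
  apply Set.union_subset
  · exact (V0_corner e).trans corners_cube
  · rintro x ⟨S, τ, -, rfl⟩
    exact w_cube e S τ

theorem w_mem (e : Option (Fin K × Bool) ≃ Fin n) (S τ) (hS : S ≠ Finset.univ) : w e S τ ∈ PP e :=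
  subset_convexHull ℝ _ (Or.inr ⟨S, τ, hS, rfl⟩)

theorem V0_PP (e : Option (Fin K × Bool) ≃ Fin n) : V0 e ⊆ PP e :=
  (Set.subset_union_left).trans (subset_convexHull ℝ _)

/-- valid inequality on `P` -/
theorem PP_ineq1 (e : Option (Fin K × Bool) ≃ Fin n) (g : Fin K) {x} (hx : x ∈ PP e) :
    x (e (some (g, true))) + x (e none) + 3 * x (e (some (g, false))) ≤ 4 := by
  have hc : Convex ℝ {x : Fin n → ℝ |
      x (e (some (g, true))) + x (e none) + 3 * x (e (some (g, false))) ≤ 4} := by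
    intro x hx y hy a b ha hb hab
    simp only [Set.mem_ofPred_eq, Pi.add_apply, Pi.smul_apply, smul_eq_mul] at *
    nlinarith
  refine convexHull_min ?_ hc hx
  rintro x (hx | ⟨S, τ, hS, rfl⟩)
  · rw [mem_V0] at hx
    simp only [Set.mem_ofPred_eq]
    rcases hx.2 g true with h | h <;> rcases hx.2 g false with h' | h' <;>
      rw [h, h', hx.1] <;> norm_num
  · simp only [Set.mem_ofPred_eq, w_none, w_some]
    by_cases h : g ∈ S
    · cases h' : τ g <;> simp [h] <;> norm_num
    · simp [h]; norm_num

theorem PP_ineq2 (e : Option (Fin K × Bool) ≃ Fin n) {x} (hx : x ∈ PP e) :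
    ((K : ℝ) + 1 / 2) * x (e none) ≤
      ∑ g, (x (e (some (g, false))) + x (e (some (g, true)))) := by
  have hc : Convex ℝ {x : Fin n → ℝ | ((K : ℝ) + 1 / 2) * x (e none) ≤
      ∑ g, (x (e (some (g, false))) + x (e (some (g, true))))} := by
    intro x hx y hy a b ha hb hab
    simp only [Set.mem_ofPred_eq, Pi.add_apply, Pi.smul_apply, smul_eq_mul] at *
    have : ∑ g, (a * x (e (some (g, false))) + b * y (e (some (g, false))) +
        (a * x (e (some (g, true))) + b * y (e (some (g, true))))) =
        a * ∑ g, (x (e (some (g, false))) + x (e (some (g, true)))) +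
        b * ∑ g, (y (e (some (g, false))) + y (e (some (g, true)))) := by
      rw [Finset.mul_sum, Finset.mul_sum, ← Finset.sum_add_distrib]
      exact Finset.sum_congr rfl fun g _ => by ring
    rw [this]
    have h1 := mul_le_mul_of_nonneg_left hx ha
    have h2 := mul_le_mul_of_nonneg_left hy hb
    linarith
  refine convexHull_min ?_ hc hx
  rintro x (hx | ⟨S, τ, hS, rfl⟩)
  · rw [mem_V0] at hx
    simp only [Set.mem_ofPred_eq, hx.1, mul_zero]
    apply Finset.sum_nonneg
    intro g _
    rcases hx.2 g true with h | h <;> rcases hx.2 g false with h' | h' <;>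
      rw [h, h'] <;> norm_num
  · simp only [Set.mem_ofPred_eq, w_none, w_some]
    obtain ⟨g0, hg0⟩ : ∃ g, g ∉ S := by
      by_contra! h
      exact hS (Finset.eq_univ_iff_forall.2 h)
    have key : ∑ g : Fin K, (1 + if g = g0 then (1/2 : ℝ) else 0) = K + 1 / 2 := by
      rw [Finset.sum_add_distrib]; simp
    rw [mul_one, ← key]
    apply Finset.sum_le_sum
    intro g _
    by_cases h : g ∈ S
    · have : g ≠ g0 := fun h' => hg0 (h' ▸ h)
      cases h' : τ g <;> simp [h, this]
    · simp only [h, if_false]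
      split_ifs <;> norm_num

theorem L_ineq (e : Option (Fin K × Bool) ≃ Fin n) (g : Fin K) {x} (hx : x ∈ Lop n (PP e)) :
    x (e (some (g, false))) + x (e (some (g, true))) + x (e none) ≤ 2 := by
  have hx := Set.mem_iInter.1 hx (e (some (g, false)))
  have hc : Convex ℝ {x : Fin n → ℝ |
      x (e (some (g, false))) + x (e (some (g, true))) + x (e none) ≤ 2} := by
    intro x hx y hy a b ha hb hab
    simp only [Set.mem_ofPred_eq, Pi.add_apply, Pi.smul_apply, smul_eq_mul] at *
    nlinarith
  refine convexHull_min ?_ hc hx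
  rintro x (⟨hP, h⟩ | ⟨hP, h⟩) <;> simp only [Set.mem_ofPred_eq] at h ⊢
  · have h1 := (PP_cube e hP (e (some (g, true)))).2
    have h2 := (PP_cube e hP (e none)).2
    linarith
  · have := PP_ineq1 e g hP
    linarith

theorem Lop_subset (P : Set (Fin n → ℝ)) (hP : Convex ℝ P) (i : Fin n) : Lop n P ⊆ P := by
  refine (Set.iInter_subset _ i).trans (convexHull_min ?_ hP)
  exact Set.union_subset Set.inter_subset_left Set.inter_subset_left

theorem corner_Lop (P : Set (Fin n → ℝ)) : P ∩ corners n ⊆ Lop n P := by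
  rintro x ⟨hx, hc⟩
  refine Set.mem_iInter.2 fun i => subset_convexHull ℝ _ ?_
  rcases hc i with h | h
  · exact Or.inl ⟨hx, h⟩
  · exact Or.inr ⟨hx, h⟩

theorem L_ne (e : Option (Fin K × Bool) ≃ Fin n) {x} (hx : x ∈ Lop n (PP e)) :
    x (e none) ≠ 1 := by
  intro h
  have h1 := PP_ineq2 e (Lop_subset _ (convex_convexHull ℝ _) (e none) hx)
  have h2 : ∑ g : Fin K, (x (e (some (g, false))) + x (e (some (g, true)))) ≤ ∑ g : Fin K, 1 := by
    apply Finset.sum_le_sum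
    intro g _
    have := L_ineq e g hx
    linarith
  simp [h] at h1 h2
  linarith

theorem PP_zero (hK : 0 < K) (e : Option (Fin K × Bool) ≃ Fin n) {x} (hx : x ∈ PP e)
    (h : x (e none) = 0) : x ∈ convexHull ℝ (V0 e) :=
  hull_V0 e x h (PP_cube e hx)

theorem hull_V0_sub (e : Option (Fin K × Bool) ≃ Fin n) :
    convexHull ℝ (V0 e) ⊆ integerHull n (PP e) :=
  convexHull_mono fun _ hx => ⟨V0_PP e hx, V0_corner e hx⟩

theorem convex_Lop (P : Set (Fin n → ℝ)) : Convex ℝ (Lop n P) :=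
  convex_iInter fun _ => convex_convexHull ℝ _

theorem L2 (hK : 0 < K) (e : Option (Fin K × Bool) ≃ Fin n) :
    Lk n 2 (PP e) = integerHull n (PP e) := by
  change Lop n (Lop n (PP e)) = _
  apply Set.Subset.antisymm
  · refine (Set.iInter_subset _ (e none)).trans
      (convexHull_min ?_ (convex_convexHull ℝ _))
    rintro x (⟨hP, h⟩ | ⟨hP, h⟩)
    · exact hull_V0_sub e
        (PP_zero hK e (Lop_subset _ (convex_convexHull ℝ _) (e none) hP) h)
    · exact absurd h (L_ne e hP)
  · refine convexHull_min ?_ (convex_Lop _)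
    intro x hx
    exact corner_Lop _ ⟨corner_Lop _ hx, hx.2⟩

theorem SN_convex (N : ℕ) : ∀ (P Q : Set (Fin n → ℝ)), Convex ℝ P → Q ∈ SN n N P →
    Convex ℝ Q := by
  rintro P Q hP hQ
  rcases N with _ | N
  · rw [SN] at hQ; exact hQ.elim
  · rw [SN] at hQ
    rcases hQ with rfl | ⟨j, N₀, N₁, _, _, _, A, _, B, _, rfl⟩
    · exact hP
    · exact convex_convexHull ℝ _

theorem SN_corner (N : ℕ) : ∀ (P Q : Set (Fin n → ℝ)), Q ∈ SN n N P →
    P ∩ corners n ⊆ Q := by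
  induction N using Nat.strong_induction_on with
  | _ N ih =>
    rintro P Q hQ x ⟨hx, hc⟩
    rcases N with _ | N
    · rw [SN] at hQ; exact hQ.elim
    · rw [SN] at hQ
      rcases hQ with rfl | ⟨j, N₀, N₁, h0, h1, hN, A, hA, B, hB, rfl⟩
      · exact hx
      · apply subset_convexHull ℝ _
        rcases hc j with h | h
        · exact Or.inl (ih N₀ (by omega) _ _ hA ⟨⟨hx, h⟩, hc⟩)
        · exact Or.inr (ih N₁ (by omega) _ _ hB ⟨⟨hx, h⟩, hc⟩)

theorem SN_path (e : Option (Fin K × Bool) ≃ Fin n) (N : ℕ) :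
    ∀ (d : ℕ) (S : Finset (Fin K)) (τ : Fin K → Bool) (R Q : Set (Fin n → ℝ)),
    Q ∈ SN n N R → N ≤ 2 ^ d → S.card + d < K →
    (∀ S' τ', S ⊆ S' → (∀ g ∈ S, τ' g = τ g) → S' ≠ Finset.univ → w e S' τ' ∈ R) →
    ∃ S' τ', w e S' τ' ∈ Q := by
  induction N using Nat.strong_induction_on with
  | _ N ih =>
    intro d S τ R Q hQ hd hcard hR
    rcases N with _ | N
    · rw [SN] at hQ; exact hQ.elim
    · rw [SN] at hQ
      rcases hQ with rfl | ⟨j, N₀, N₁, h0, h1, hN, A, hA, B, hB, rfl⟩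
      · refine ⟨S, τ, hR S τ subset_rfl (fun _ _ => rfl) ?_⟩
        rintro rfl
        simp at hcard
      · have useA : (∃ S' τ', w e S' τ' ∈ A) → ∃ S' τ', w e S' τ' ∈ convexHull ℝ (A ∪ B) := by
          rintro ⟨S', τ', h⟩
          exact ⟨S', τ', subset_convexHull ℝ _ (Or.inl h)⟩
        have useB : (∃ S' τ', w e S' τ' ∈ B) → ∃ S' τ', w e S' τ' ∈ convexHull ℝ (A ∪ B) := by
          rintro ⟨S', τ', h⟩
          exact ⟨S', τ', subset_convexHull ℝ _ (Or.inr h)⟩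
        obtain ⟨o, rfl⟩ := e.surjective j
        rcases o with _ | ⟨g, c⟩
        · apply useB
          refine ih N₁ (by omega) d S τ _ _ hB (by omega) hcard ?_
          intro S' τ' hS hτ hu
          exact ⟨hR S' τ' hS hτ hu, w_none e S' τ'⟩
        · by_cases hg : g ∈ S
          · by_cases hc : τ g = c
            · apply useB
              refine ih N₁ (by omega) d S τ _ _ hB (by omega) hcard ?_
              intro S' τ' hS hτ hu
              refine ⟨hR S' τ' hS hτ hu, ?_⟩
              simp [w_some, hS hg, hτ g hg, hc]
            · apply useA
              refine ih N₀ (by omega) d S τ _ _ hA (by omega) hcard ?_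
              intro S' τ' hS hτ hu
              refine ⟨hR S' τ' hS hτ hu, ?_⟩
              simp [w_some, hS hg, hτ g hg, hc]
          · rcases d with _ | d
            · simp at hd; omega
            · rw [pow_succ] at hd
              have hcard' : (insert g S).card + d < K := by
                rw [Finset.card_insert_of_notMem hg]; omega
              have hτ2 : ∀ (b : Bool) (τ' : Fin K → Bool),
                  (∀ g' ∈ insert g S, τ' g' = Function.update τ g b g') →
                  (∀ g' ∈ S, τ' g' = τ g') ∧ τ' g = b := by
                intro b τ' h
                refine ⟨fun g' hg' => ?_, ?_⟩
                · have hne : g' ≠ g := fun h' => hg (h' ▸ hg')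
                  rw [h g' (Finset.mem_insert_of_mem hg'), Function.update_of_ne hne]
                · rw [h g (Finset.mem_insert_self g S), Function.update_self]
              by_cases hlt : N₀ ≤ 2 ^ d
              · apply useA
                refine ih N₀ (by omega) d (insert g S) (Function.update τ g (!c)) _ _ hA hlt
                  hcard' ?_
                intro S' τ' hS hτ hu
                obtain ⟨ha, hb⟩ := hτ2 _ _ hτ
                refine ⟨hR S' τ' ((Finset.subset_insert g S).trans hS) ha hu, ?_⟩
                simp [w_some, hS (Finset.mem_insert_self g S), hb]
              · apply useB
                refine ih N₁ (by omega) d (insert g S) (Function.update τ g c) _ _ hB (by omega)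
                  hcard' ?_
                intro S' τ' hS hτ hu
                obtain ⟨ha, hb⟩ := hτ2 _ _ hτ
                refine ⟨hR S' τ' ((Finset.subset_insert g S).trans hS) ha hu, ?_⟩
                simp [w_some, hS (Finset.mem_insert_self g S), hb]

theorem intHull_last (e : Option (Fin K × Bool) ≃ Fin n) {x} (hx : x ∈ integerHull n (PP e)) :
    x (e none) = 0 := by
  have hc : Convex ℝ {x : Fin n → ℝ | x (e none) = 0} := by
    intro x hx y hy a b ha hb hab
    simp only [Set.mem_ofPred_eq, Pi.add_apply, Pi.smul_apply, smul_eq_mul] at *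
    simp [hx, hy]
  refine convexHull_min ?_ hc hx
  intro y hy
  rcases hy.2 (e none) with h | h
  · exact h
  · exact absurd h (L_ne e (corner_Lop _ hy))

theorem main (e : Option (Fin K × Bool) ≃ Fin n) (d : ℕ) (hd : d < K) :
    integerHull n (PP e) ⊂ ⋂ Q ∈ SN n (2 ^ d) (PP e), Q := by
  have hsub : ∀ Q ∈ SN n (2 ^ d) (PP e), integerHull n (PP e) ⊆ Q := fun Q hQ =>
    convexHull_min (SN_corner _ _ _ hQ) (SN_convex _ _ _ (convex_convexHull ℝ _) hQ)
  rw [Set.ssubset_iff_of_subset (Set.subset_iInter₂ hsub)]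
  refine ⟨fun _ => 1 / 2, Set.mem_iInter₂.2 fun Q hQ => ?_, fun h => ?_⟩
  · obtain ⟨S, τ, hw⟩ := SN_path e (2 ^ d) d ∅ (fun _ => true) _ _ hQ le_rfl (by simpa using hd)
      (fun S' τ' _ _ h => w_mem e S' τ' h)
    have hu : (fun i => 1 - w e S τ i) ∈ Q := by
      refine hsub Q hQ (hull_V0_sub e (hull_V0 e _ ?_ ?_))
      · simp [w_none]
      · intro i
        have := w_cube e S τ i
        constructor <;> linarith [this.1, this.2]
    have := (SN_convex _ _ _ (convex_convexHull ℝ _) hQ) hw hu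
      (a := 1 / 2) (b := 1 / 2) (by norm_num) (by norm_num) (by norm_num)
    convert this using 1
    funext i
    simp only [Pi.add_apply, Pi.smul_apply, smul_eq_mul]
    ring
  · have := intHull_last e h
    norm_num at this

end Aux

theorem stmt14 (n : ℕ) (hn : 7 ≤ n) (hmod : n % 6 = 1) :
    ∃ (V : Set (Fin n → ℝ)) (P : Set (Fin n → ℝ)), V.Finite ∧ P = convexHull ℝ V ∧
      P ⊆ cube n ∧
      Lk n 2 P = integerHull n P ∧
      integerHull n P ⊂ ⋂ Q ∈ SN n (2 ^ ((n - 1) / 6)) P, Q := by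
  obtain ⟨k, rfl⟩ : ∃ k, n = 6 * k + 1 := ⟨n / 6, by omega⟩
  have hcard : Fintype.card (Option (Fin (3 * k) × Bool)) = 6 * k + 1 := by
    simp; ring
  let e := Fintype.equivFinOfCardEq hcard
  refine ⟨Aux.V0 e ∪ Aux.V1 e, Aux.PP e, (Aux.V0_finite e).union (Aux.V1_finite e), rfl,
    Aux.PP_cube e, Aux.L2 (by omega) e, ?_⟩
  exact Aux.main e _ (by omega)
end

section
/- Let n ≥ 1, let P ⊆ [0,1]^n be a convex set, and let k ∈ {1,…,n}. Then T^k(P) ⊆ B^k(P). -/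
open Set

/-- `R_k(P)`: the family of branch-and-bound relaxations of `P` of height at most `k`. -/
def Rk (n : ℕ) : ℕ → Set (Fin n → ℝ) → Set (Set (Fin n → ℝ))
  | 0, P => {P}
  | k + 1, P => {P} ∪ {Q | ∃ j : Fin n, ∃ A ∈ Rk n k (P ∩ {x | x j = 0}),
      ∃ B ∈ Rk n k (P ∩ {x | x j = 1}), Q = convexHull ℝ (A ∪ B)}

/-- The height-`k` branch-and-bound operator `T^k`. -/
def Tk (n k : ℕ) (P : Set (Fin n → ℝ)) : Set (Fin n → ℝ) :=
  ⋂ Q ∈ Rk n k P, Q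

/-- The Balas–Ceria–Cornuéjols operator `B^k`. -/
def Bk (n k : ℕ) (P : Set (Fin n → ℝ)) : Set (Fin n → ℝ) :=
  ⋂ S ∈ {S : Finset (Fin n) | S.card = k},
    convexHull ℝ {x ∈ P | ∀ j ∈ S, x j = 0 ∨ x j = 1}

theorem exists_Rk (n : ℕ) (S : Finset (Fin n)) : ∀ P : Set (Fin n → ℝ),
    ∃ Q ∈ Rk n S.card P, Q ⊆ convexHull ℝ {x ∈ P | ∀ j ∈ S, x j = 0 ∨ x j = 1} := by
  induction S using Finset.induction_on with
  | empty =>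
    intro P
    refine ⟨P, by simp [Rk], ?_⟩
    intro x hx
    exact subset_convexHull ℝ _ ⟨hx, by simp⟩
  | insert a S ha ih =>
    intro P
    obtain ⟨A, hA, hA'⟩ := ih (P ∩ {x | x a = 0})
    obtain ⟨B, hB, hB'⟩ := ih (P ∩ {x | x a = 1})
    refine ⟨convexHull ℝ (A ∪ B), ?_, ?_⟩
    · rw [Finset.card_insert_of_notMem ha]
      exact Or.inr ⟨a, A, hA, B, hB, rfl⟩
    · refine convexHull_min (Set.union_subset (hA'.trans (convexHull_mono ?_))
        (hB'.trans (convexHull_mono ?_))) (convex_convexHull ℝ _)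
      · rintro x ⟨⟨hP, h0⟩, h⟩
        exact ⟨hP, (Finset.forall_mem_insert _ _ _).2 ⟨Or.inl h0, h⟩⟩
      · rintro x ⟨⟨hP, h1⟩, h⟩
        exact ⟨hP, (Finset.forall_mem_insert _ _ _).2 ⟨Or.inr h1, h⟩⟩

theorem stmt15 (n : ℕ) (hn : 1 ≤ n) (P : Set (Fin n → ℝ)) (hPcube : P ⊆ cube n)
    (hPconv : Convex ℝ P) (k : ℕ) (hk1 : 1 ≤ k) (hkn : k ≤ n) :
    Tk n k P ⊆ Bk n k P := by
  intro x hx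
  simp only [Bk, Set.mem_iInter]
  intro S hS
  obtain ⟨Q, hQ, hQ'⟩ := exists_Rk n S P
  have hS' : S.card = k := hS
  rw [hS'] at hQ
  simp only [Tk, Set.mem_iInter] at hx
  exact hQ' (hx Q hQ)
end

section
/- Let P := conv({(0,0,0), (1,0,0), (0,1,1), (1,1,1), (0,0,1/2), (1/2,0,1), (1,1/2,1)}) ⊆ [0,1]^3. Then T^2(P) = P_I = {x ∈ [0,1]^3 : x_2 = x_3}, and there exists x̄ ∈ B^2(P) with x̄_3 > x̄_2; in particular T^2(P) ⊊ B^2(P). -/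
open Set

theorem hull_sub_Rk (k : ℕ) : ∀ (P Q : Set (Fin 3 → ℝ)), Convex ℝ P → Q ∈ Rk 3 k P →
    integerHull 3 P ⊆ Q := by
  have base : ∀ P : Set (Fin 3 → ℝ), Convex ℝ P → integerHull 3 P ⊆ P :=
    fun P h => convexHull_min inter_subset_left h
  induction k with
  | zero =>
    intro P Q h hQ
    have : Q = P := hQ
    subst this
    exact base _ h
  | succ k ih =>
    intro P Q h hQ
    rcases hQ with hQ | ⟨j, A, hA, B, hB, rfl⟩
    · have : Q = P := hQ
      subst this
      exact base _ h
    · have hc : ∀ c : ℝ, Convex ℝ (P ∩ {x | x j = c}) := fun c =>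
        h.inter (convex_hyperplane (f := fun x : Fin 3 → ℝ => x j)
          ⟨fun _ _ => rfl, fun _ _ => rfl⟩ c)
      have h0 := ih _ _ (hc 0) hA
      have h1 := ih _ _ (hc 1) hB
      refine convexHull_mono ?_
      rintro x ⟨hx, hx'⟩
      rcases hx' j with e | e
      · exact Or.inl (h0 (subset_convexHull ℝ _ ⟨⟨hx, e⟩, hx'⟩))
      · exact Or.inr (h1 (subset_convexHull ℝ _ ⟨⟨hx, e⟩, hx'⟩))

theorem sq_mem (C : Set (Fin 3 → ℝ)) (hC : Convex ℝ C) (h1 : ![0, 0, 0] ∈ C) (h2 : ![1, 0, 0] ∈ C)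
    (h3 : ![0, 1, 1] ∈ C) (h4 : ![1, 1, 1] ∈ C) (a b : ℝ) (ha : 0 ≤ a) (ha' : a ≤ 1)
    (hb : 0 ≤ b) (hb' : b ≤ 1) : ![a, b, b] ∈ C := by
  have e1 := hC h1 h2 (sub_nonneg.2 ha') ha (by ring)
  have e2 := hC h3 h4 (sub_nonneg.2 ha') ha (by ring)
  have e3 := hC e1 e2 (sub_nonneg.2 hb') hb (by ring)
  convert e3 using 1
  ext i
  fin_cases i <;> simp <;> ring

/-- A convex set containing the square and an apex contains the relevant combination. -/
theorem apex_mem (C : Set (Fin 3 → ℝ)) (hC : Convex ℝ C) (h1 : ![0, 0, 0] ∈ C)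
    (h2 : ![1, 0, 0] ∈ C)
    (h3 : ![0, 1, 1] ∈ C) (h4 : ![1, 1, 1] ∈ C) (v : Fin 3 → ℝ) (hv : v ∈ C)
    (a b t : ℝ) (ha : 0 ≤ a) (ha' : a ≤ 1)
    (hb : 0 ≤ b) (hb' : b ≤ 1) (ht : 0 ≤ t) (ht' : t ≤ 1) :
    (1 - t) • ![a, b, b] + t • v ∈ C :=
  hC (sq_mem C hC h1 h2 h3 h4 a b ha ha' hb hb') hv (sub_nonneg.2 ht') ht (by ring)

theorem P_ineq (x : Fin 3 → ℝ) (hx : x ∈ convexHull ℝ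
      ({![0, 0, 0], ![1, 0, 0], ![0, 1, 1], ![1, 1, 1],
       ![0, 0, 1 / 2], ![1 / 2, 0, 1], ![1, 1 / 2, 1]} : Set (Fin 3 → ℝ))) :
    0 ≤ x 1 ∧ x 1 ≤ x 2 ∧ x 2 ≤ 1 ∧ 2 * x 2 ≤ 1 + x 1 + 2 * x 0 ∧
      x 2 ≤ 2 * x 1 + 2 * (1 - x 0) := by
  have hconv : Convex ℝ {x : Fin 3 → ℝ | 0 ≤ x 1 ∧ x 1 ≤ x 2 ∧ x 2 ≤ 1 ∧
      2 * x 2 ≤ 1 + x 1 + 2 * x 0 ∧ x 2 ≤ 2 * x 1 + 2 * (1 - x 0)} := by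
    rintro x ⟨a1, a2, a3, a4, a5⟩ y ⟨b1, b2, b3, b4, b5⟩ s t hs ht hst
    obtain rfl : s = 1 - t := by linarith
    simp only [mem_ofPred_eq, Pi.add_apply, Pi.smul_apply, smul_eq_mul]
    refine ⟨by positivity, ?_, ?_, ?_, ?_⟩ <;> nlinarith
  refine convexHull_min ?_ hconv hx
  intro y hy
  simp only [mem_insert_iff, mem_singleton_iff] at hy
  rcases hy with rfl | rfl | rfl | rfl | rfl | rfl | rfl <;> simp <;> norm_num

theorem stmt16 (P : Set (Fin 3 → ℝ))
    (hP : P = convexHull ℝ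
      {![0, 0, 0], ![1, 0, 0], ![0, 1, 1], ![1, 1, 1],
       ![0, 0, 1 / 2], ![1 / 2, 0, 1], ![1, 1 / 2, 1]}) :
    Tk 3 2 P = integerHull 3 P ∧
    integerHull 3 P = {x ∈ cube 3 | x 1 = x 2} ∧
    (∃ xbar ∈ Bk 3 2 P, xbar 1 < xbar 2) ∧
    Tk 3 2 P ⊂ Bk 3 2 P := by
  have hin : ∀ x ∈ P, 0 ≤ x 1 ∧ x 1 ≤ x 2 ∧ x 2 ≤ 1 ∧ 2 * x 2 ≤ 1 + x 1 + 2 * x 0 ∧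
      x 2 ≤ 2 * x 1 + 2 * (1 - x 0) := fun x hx => P_ineq x (hP ▸ hx)
  have hPc : Convex ℝ P := hP ▸ convex_convexHull ℝ _
  have m1 : ![0, 0, 0] ∈ P := by rw [hP]; exact subset_convexHull ℝ _ (by simp)
  have m2 : ![1, 0, 0] ∈ P := by rw [hP]; exact subset_convexHull ℝ _ (by simp)
  have m3 : ![0, 1, 1] ∈ P := by rw [hP]; exact subset_convexHull ℝ _ (by simp)
  have m4 : ![1, 1, 1] ∈ P := by rw [hP]; exact subset_convexHull ℝ _ (by simp)
  have m5 : ![0, 0, 1 / 2] ∈ P := by rw [hP]; exact subset_convexHull ℝ _ (by simp)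
  have m6 : ![1 / 2, 0, 1] ∈ P := by rw [hP]; exact subset_convexHull ℝ _ (by simp)
  have m7 : ![1, 1 / 2, 1] ∈ P := by rw [hP]; exact subset_convexHull ℝ _ (by simp)
  clear hP
  have c1 : ![0, 0, 0] ∈ corners 3 := by intro i; fin_cases i <;> simp
  have c2 : ![1, 0, 0] ∈ corners 3 := by intro i; fin_cases i <;> simp
  have c3 : ![0, 1, 1] ∈ corners 3 := by intro i; fin_cases i <;> simp
  have c4 : ![1, 1, 1] ∈ corners 3 := by intro i; fin_cases i <;> simp
  have hT : Tk 3 2 P = integerHull 3 P := by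
    apply Subset.antisymm
    · refine (biInter_subset_of_mem
        (t := fun Q => Q) (x := convexHull ℝ (
          convexHull ℝ (((P ∩ {x | x 0 = 0}) ∩ {x | x 2 = 0}) ∪
            ((P ∩ {x | x 0 = 0}) ∩ {x | x 2 = 1})) ∪
          convexHull ℝ (((P ∩ {x | x 0 = 1}) ∩ {x | x 1 = 0}) ∪
            ((P ∩ {x | x 0 = 1}) ∩ {x | x 1 = 1})))) ?_).trans ?_
      · exact Or.inr ⟨0, _, Or.inr ⟨2, _, rfl, _, rfl, rfl⟩, _,
          Or.inr ⟨1, _, rfl, _, rfl, rfl⟩, rfl⟩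
      · refine convexHull_min (union_subset (convexHull_mono ?_) (convexHull_mono ?_))
          (convex_convexHull ℝ _)
        · rintro x (⟨⟨h, h0⟩, h1⟩ | ⟨⟨h, h0⟩, h1⟩) <;> refine ⟨h, ?_⟩ <;>
            obtain ⟨i1, i2, i3, i4, i5⟩ := hin x h <;> simp only [mem_ofPred_eq] at h0 h1 <;>
            simp only [corners, mem_ofPred_eq, Fin.forall_fin_succ, Fin.isValue]
          · have : x 1 = 0 := by linarith
            simp [*]
          · have : x 1 = 1 := by linarith
            simp [*]
        · rintro x (⟨⟨h, h0⟩, h1⟩ | ⟨⟨h, h0⟩, h1⟩) <;> refine ⟨h, ?_⟩ <;>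
            obtain ⟨i1, i2, i3, i4, i5⟩ := hin x h <;> simp only [mem_ofPred_eq] at h0 h1 <;>
            simp only [corners, mem_ofPred_eq, Fin.forall_fin_succ, Fin.isValue]
          · have : x 2 = 0 := by linarith
            simp [*]
          · have : x 2 = 1 := by linarith
            simp [*]
    · exact subset_iInter₂ fun Q hQ => hull_sub_Rk 2 P Q hPc hQ
  have hI : integerHull 3 P = {x ∈ cube 3 | x 1 = x 2} := by
    apply Subset.antisymm
    · refine convexHull_min ?_ ?_
      · rintro x ⟨h, hc⟩
        obtain ⟨i1, i2, i3, i4, i5⟩ := hin x h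
        refine ⟨fun i => ?_, ?_⟩
        · rcases hc i with e | e <;> rw [e] <;> norm_num
        · rcases hc 0 with e0 | e0 <;> rcases hc 1 with e1 | e1 <;>
            rcases hc 2 with e2 | e2 <;> linarith
      · rintro x ⟨hx, hx'⟩ y ⟨hy, hy'⟩ s t hs ht hst
        obtain rfl : s = 1 - t := by linarith
        refine ⟨fun i => ?_, ?_⟩
        · have := hx i
          have := hy i
          simp only [Pi.add_apply, Pi.smul_apply, smul_eq_mul]
          constructor <;> nlinarith
        · simp [hx', hy']
    · rintro x ⟨hx, h12⟩
      have := sq_mem (integerHull 3 P) (convex_convexHull ℝ _)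
        (subset_convexHull ℝ _ ⟨m1, c1⟩) (subset_convexHull ℝ _ ⟨m2, c2⟩)
        (subset_convexHull ℝ _ ⟨m3, c3⟩) (subset_convexHull ℝ _ ⟨m4, c4⟩)
        (x 0) (x 1) (hx 0).1 (hx 0).2 (hx 1).1 (hx 1).2
      convert this using 1
      ext i
      fin_cases i <;> simp [h12]
  have hB : ![1 / 2, 1 / 2, 5 / 8] ∈ Bk 3 2 P := by
    refine mem_iInter₂.2 fun S hS => ?_
    have hcv := convex_convexHull ℝ {x ∈ P | ∀ j ∈ S, x j = 0 ∨ x j = 1}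
    have key := apex_mem _ hcv
      (subset_convexHull ℝ _ ⟨m1, fun j _ => c1 j⟩) (subset_convexHull ℝ _ ⟨m2, fun j _ => c2 j⟩)
      (subset_convexHull ℝ _ ⟨m3, fun j _ => c3 j⟩) (subset_convexHull ℝ _ ⟨m4, fun j _ => c4 j⟩)
    have hcase : S = {0, 1} ∨ S = {0, 2} ∨ S = {1, 2} := by
      have hS' : S.card = 2 := hS
      clear key hcv hS
      revert S
      decide
    rcases hcase with rfl | rfl | rfl
    · have := key ![0, 0, 1 / 2] (subset_convexHull ℝ _ ⟨m5, by simp⟩) (2 / 3) (2 / 3) (1 / 4)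
        (by norm_num) (by norm_num) (by norm_num) (by norm_num) (by norm_num) (by norm_num)
      convert this using 1
      ext i
      fin_cases i <;> simp <;> norm_num
    · have := key ![1, 1 / 2, 1] (subset_convexHull ℝ _ ⟨m7, by simp⟩) (1 / 3) (1 / 2) (1 / 4)
        (by norm_num) (by norm_num) (by norm_num) (by norm_num) (by norm_num) (by norm_num)
      convert this using 1
      ext i
      fin_cases i <;> simp <;> norm_num
    · have := key ![1 / 2, 0, 1] (subset_convexHull ℝ _ ⟨m6, by simp⟩) (1 / 2) (4 / 7) (1 / 8)
        (by norm_num) (by norm_num) (by norm_num) (by norm_num) (by norm_num) (by norm_num)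
      convert this using 1
      ext i
      fin_cases i <;> simp <;> norm_num
  refine ⟨hT, hI, ⟨_, hB, by simp; norm_num⟩, ?_⟩
  refine (ssubset_iff_of_subset ?_).2 ⟨_, hB, ?_⟩
  · rw [hT]
    exact subset_iInter₂ fun S _ => convexHull_mono fun x hx => ⟨hx.1, fun j _ => hx.2 j⟩
  · rw [hT, hI]
    rintro ⟨-, h⟩
    simp at h
    norm_num at h
end

section
/- Let n ≥ 7 with n ≡ 1 (mod 6). There exists a polytope P ⊆ [0,1]^n (the convex hull of finitely many points) such that P_I = L^2(P) and L^2(P) ⊊ B^{(n−1)/6}(P). -/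
open Set

def relax (n : ℕ) (z : Fin n) : Set (Fin n → ℝ) :=
  {x | (0 ≤ x z ∧ x z ≤ 1) ∧ (∀ i, i ≠ z → x z / 2 ≤ x i ∧ x i ≤ (1 + x z) / 2) ∧
    ∑ i, x i = 1 / 2 + ((n : ℝ) - 1) * x z}

lemma relax_convex (n : ℕ) (z : Fin n) : Convex ℝ (relax n z) := by
  rintro x ⟨⟨hx1, hx2⟩, hx3, hx4⟩ y ⟨⟨hy1, hy2⟩, hy3, hy4⟩ a b ha hb hab
  have hb' : b = 1 - a := by linarith
  refine ⟨⟨?_, ?_⟩, ?_, ?_⟩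
  · simp only [Pi.add_apply, Pi.smul_apply, smul_eq_mul]; positivity
  · simp only [Pi.add_apply, Pi.smul_apply, smul_eq_mul]
    nlinarith
  · intro i hi
    obtain ⟨h1, h2⟩ := hx3 i hi
    obtain ⟨h3, h4⟩ := hy3 i hi
    simp only [Pi.add_apply, Pi.smul_apply, smul_eq_mul]
    have e1 := mul_le_mul_of_nonneg_left h1 ha
    have e2 := mul_le_mul_of_nonneg_left h2 ha
    have e3 := mul_le_mul_of_nonneg_left h3 hb
    have e4 := mul_le_mul_of_nonneg_left h4 hb
    constructor <;> linarith
  · simp only [Pi.add_apply, Pi.smul_apply, smul_eq_mul, Finset.sum_add_distrib,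
      ← Finset.mul_sum, hx4, hy4]
    subst hb'
    ring

lemma diag_convex (n : ℕ) (z i : Fin n) : Convex ℝ {x : Fin n → ℝ | x i = x z} := by
  intro x hx y hy a b _ _ _
  simp only [mem_setOf_eq] at hx hy
  simp [hx, hy]

lemma level_convex (n : ℕ) (z : Fin n) (c : ℝ) : Convex ℝ {x : Fin n → ℝ | x z = c} := by
  intro x hx y hy a b _ _ hab
  simp only [mem_setOf_eq] at hx hy
  simp [hx, hy, ← add_mul, hab]

lemma relax_eq {n : ℕ} {z : Fin n} {x : Fin n → ℝ} (hx : x ∈ relax n z) (i : Fin n)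
    (h : x i = 0 ∨ x i = 1) : x i = x z := by
  by_cases hi : i = z
  · rw [hi]
  · obtain ⟨⟨h1, h2⟩, h3, _⟩ := hx
    obtain ⟨h4, h5⟩ := h3 i hi
    rcases h with h | h <;> linarith

lemma relax_half {n : ℕ} {z : Fin n} {x : Fin n → ℝ} (hx : x ∈ relax n z)
    (h : ∀ i, x i = x z) : x z = 1 / 2 := by
  have := hx.2.2
  rw [Finset.sum_congr rfl (fun i _ => h i)] at this
  simp at this
  linarith

lemma Lop_half {n : ℕ} {z : Fin n} {P : Set (Fin n → ℝ)} (hP : P ⊆ relax n z) :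
    Lop n P ⊆ {x | x z = 1 / 2} := by
  intro x hx
  have hx := mem_iInter.1 hx
  refine relax_half (convexHull_min ?_ (relax_convex n z) (hx z)) fun i =>
    convexHull_min ?_ (diag_convex n z i) (hx i)
  · rintro y (hy | hy) <;> exact hP hy.1
  · rintro y (hy | hy)
    · exact relax_eq (hP hy.1) i (Or.inl hy.2)
    · exact relax_eq (hP hy.1) i (Or.inr hy.2)

theorem stmt18 (n : ℕ) (hn : 7 ≤ n) (hmod : n % 6 = 1) :
    ∃ (V : Set (Fin n → ℝ)) (P : Set (Fin n → ℝ)), V.Finite ∧ P = convexHull ℝ V ∧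
      P ⊆ cube n ∧
      integerHull n P = Lk n 2 P ∧
      Lk n 2 P ⊂ Bk n ((n - 1) / 6) P := by
  obtain ⟨z⟩ : Nonempty (Fin n) := ⟨⟨0, by omega⟩⟩
  let f : Fin n → Fin n → ℝ := fun i => Pi.single i (1 / 2)
  let V : Set (Fin n → ℝ) := Set.image f {i | i ≠ z} ∪ Set.image (fun i => 1 - f i) {i | i ≠ z}
  have hV : V ⊆ relax n z := by
    rintro _ (⟨i, hi, rfl⟩ | ⟨i, hi, rfl⟩)
    · have hz : f i z = 0 := by simp [f, Pi.single_apply, Ne.symm hi]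
      refine ⟨by rw [hz]; norm_num, fun j _ => ?_, ?_⟩
      · rw [hz]; simp only [f, Pi.single_apply]; split_ifs <;> norm_num
      · rw [hz]; simp [f]
    · have hz : (1 - f i) z = 1 := by simp [f, Pi.single_apply, Ne.symm hi]
      refine ⟨by simp only [hz]; norm_num, fun j _ => ?_, ?_⟩
      · simp only [hz]; simp only [f, Pi.sub_apply, Pi.one_apply, Pi.single_apply]
        split_ifs <;> norm_num
      · simp only [hz]; simp [f]; ring
  have hP : convexHull ℝ V ⊆ relax n z := convexHull_min hV (relax_convex n z)
  have hL : Lk n 2 (convexHull ℝ V) = ∅ := by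
    rw [eq_empty_iff_forall_notMem]
    intro x hx
    have hx := mem_iInter.1 hx z
    have : (Lop n (convexHull ℝ V) ∩ {x | x z = 0} ∪ Lop n (convexHull ℝ V) ∩ {x | x z = 1})
        = ∅ := by
      rw [eq_empty_iff_forall_notMem]
      rintro y (⟨h1, h2⟩ | ⟨h1, h2⟩) <;>
      · have := Lop_half hP h1
        simp only [mem_setOf_eq] at this h2
        linarith
    change x ∈ convexHull ℝ (Lop n (convexHull ℝ V) ∩ {x | x z = 0} ∪
      Lop n (convexHull ℝ V) ∩ {x | x z = 1}) at hx
    rw [this] at hx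
    simp at hx
  refine ⟨V, convexHull ℝ V, toFinite _, rfl, ?_, ?_, ?_⟩
  · intro x hx i
    obtain ⟨h1, h2, _⟩ := hP hx
    by_cases hi : i = z
    · rw [hi]; exact h1
    · obtain ⟨h3, h4⟩ := h2 i hi
      constructor <;> linarith
  · rw [hL, integerHull, convexHull_eq_empty, eq_empty_iff_forall_notMem]
    rintro x ⟨h1, h2⟩
    have h3 := relax_half (hP h1) fun i => relax_eq (hP h1) i (h2 i)
    rcases h2 z with h | h <;> linarith
  · rw [hL, empty_ssubset]
    refine ⟨fun _ => 1 / 2, mem_iInter₂.2 fun S hS => ?_⟩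
    have hS : S.card = (n - 1) / 6 := hS
    obtain ⟨i, hi⟩ : ∃ i, i ∉ insert z S := by
      by_contra! h
      have h1 : insert z S = Finset.univ := Finset.eq_univ_iff_forall.2 h
      have h2 := Finset.card_insert_le z S
      rw [h1, Finset.card_univ, Fintype.card_fin] at h2
      omega
    simp only [Finset.mem_insert, not_or] at hi
    have hf : ∀ j ∈ S, f i j = 0 := by
      intro j hj
      have : j ≠ i := fun h => hi.2 (h ▸ hj)
      simp [f, this]
    have m1 : f i ∈ {x ∈ convexHull ℝ V | ∀ j ∈ S, x j = 0 ∨ x j = 1} :=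
      ⟨subset_convexHull ℝ V (Or.inl ⟨i, hi.1, rfl⟩), fun j hj => Or.inl (hf j hj)⟩
    have m2 : 1 - f i ∈ {x ∈ convexHull ℝ V | ∀ j ∈ S, x j = 0 ∨ x j = 1} :=
      ⟨subset_convexHull ℝ V (Or.inr ⟨i, hi.1, rfl⟩),
        fun j hj => Or.inr (by simp [hf j hj])⟩
    have := convex_convexHull ℝ {x ∈ convexHull ℝ V | ∀ j ∈ S, x j = 0 ∨ x j = 1}
      (subset_convexHull ℝ _ m1) (subset_convexHull ℝ _ m2)
      (a := 1 / 2) (b := 1 / 2) (by norm_num) (by norm_num) (by norm_num)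
    convert this using 1
    funext j
    simp only [Pi.add_apply, Pi.smul_apply, smul_eq_mul, Pi.sub_apply, Pi.one_apply]
    ring
end

section
/- Let n ≥ 7 with n ≡ 1 (mod 6). There exists a polytope P ⊆ [0,1]^n (the convex hull of finitely many points) such that P_I = L^2(P) and L^2(P) ⊊ T^{(n−1)/6}(P). -/
open Set

theorem rk_corners (n : ℕ) : ∀ (k : ℕ) (P Q : Set (Fin n → ℝ)), Q ∈ Rk n k P →
    P ∩ corners n ⊆ Q := by
  intro k
  induction k with
  | zero =>
    intro P Q hQ
    have : Q = P := hQ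
    subst this
    exact inter_subset_left
  | succ k ih =>
    intro P Q hQ
    rcases hQ with hQ | ⟨j, A, hA, B, hB, rfl⟩
    · have : Q = P := hQ
      subst this
      exact inter_subset_left
    · intro x hx
      apply subset_convexHull ℝ
      rcases hx.2 j with h | h
      · exact Or.inl (ih _ _ hA ⟨⟨hx.1, h⟩, hx.2⟩)
      · exact Or.inr (ih _ _ hB ⟨⟨hx.1, h⟩, hx.2⟩)

theorem rk_convex (n k : ℕ) (P Q : Set (Fin n → ℝ)) (hP : Convex ℝ P) (hQ : Q ∈ Rk n k P) :
    Convex ℝ Q := by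
  cases k with
  | zero =>
    have : Q = P := hQ
    subst this
    exact hP
  | succ k =>
    rcases hQ with hQ | ⟨j, A, hA, B, hB, rfl⟩
    · have : Q = P := hQ
      subst this
      exact hP
    · exact convex_convexHull ℝ _

/-- The all-ones vector with coordinate `i` replaced by one half. -/
noncomputable def qpt (n : ℕ) (i : Fin n) : Fin n → ℝ := fun j => if j = i then 1 / 2 else 1

theorem rk_qpt (n : ℕ) (l : Fin n) : ∀ (k : ℕ) (P Q : Set (Fin n → ℝ)) (S : Finset (Fin n)),
    Q ∈ Rk n k P → S.card + k + 1 < n → (∀ i, i ≠ l → i ∉ S → qpt n i ∈ P) →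
    ∃ i, i ≠ l ∧ qpt n i ∈ Q := by
  have base : ∀ (P : Set (Fin n → ℝ)) (S : Finset (Fin n)), S.card + 1 < n →
      (∀ i, i ≠ l → i ∉ S → qpt n i ∈ P) → ∃ i, i ≠ l ∧ qpt n i ∈ P := by
    intro P S hS h
    have hc : (insert l S).card < (Finset.univ : Finset (Fin n)).card := by
      have := Finset.card_insert_le l S
      rw [Finset.card_univ, Fintype.card_fin]
      omega
    obtain ⟨i, -, hi⟩ := Finset.exists_mem_notMem_of_card_lt_card hc
    rw [Finset.mem_insert, not_or] at hi
    exact ⟨i, hi.1, h i hi.1 hi.2⟩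
  intro k
  induction k with
  | zero =>
    intro P Q S hQ hS h
    have : Q = P := hQ
    subst this
    exact base _ S (by omega) h
  | succ k ih =>
    intro P Q S hQ hS h
    rcases hQ with hQ | ⟨j, A, hA, B, hB, rfl⟩
    · have : Q = P := hQ
      subst this
      exact base _ S (by omega) h
    · have hc := Finset.card_insert_le j S
      obtain ⟨i, hi, hiB⟩ := ih _ B (insert j S) hB (by omega) (by
        intro i hi hiS
        rw [Finset.mem_insert, not_or] at hiS
        refine ⟨h i hi hiS.2, ?_⟩
        have : j ≠ i := fun e => hiS.1 e.symm
        simp [qpt, this])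
      exact ⟨i, hi, subset_convexHull ℝ _ (Or.inr hiB)⟩

theorem lop_subset (n : ℕ) (P : Set (Fin n → ℝ)) (hP : Convex ℝ P) (l : Fin n) : Lop n P ⊆ P := by
  intro x hx
  have := mem_iInter.1 hx l
  exact convexHull_min (union_subset inter_subset_left inter_subset_left) hP this

theorem lop_convex (n : ℕ) (P : Set (Fin n → ℝ)) : Convex ℝ (Lop n P) :=
  convex_iInter fun _ => convex_convexHull ℝ _

theorem lop_corners (n : ℕ) (P : Set (Fin n → ℝ)) : P ∩ corners n ⊆ Lop n P := by
  intro x hx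
  refine mem_iInter.2 fun i => subset_convexHull ℝ _ ?_
  rcases hx.2 i with h | h
  · exact Or.inl ⟨hx.1, h⟩
  · exact Or.inr ⟨hx.1, h⟩

theorem face_hull (n : ℕ) (l : Fin n) (x : Fin n → ℝ) (hx : x ∈ cube n) (h0 : x l = 0) :
    x ∈ convexHull ℝ (corners n ∩ {x | x l = 0}) := by
  have hsub : Set.pi univ (fun j => if j = l then ({0} : Set ℝ) else {0, 1}) ⊆
      corners n ∩ {x | x l = 0} := by
    intro y hy
    constructor
    · intro j
      have := hy j (mem_univ j)
      by_cases hj : j = l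
      · simp only [hj, if_true] at this
        left; rw [hj]; exact this
      · simpa [hj] using this
    · simpa using hy l (mem_univ l)
  apply convexHull_mono hsub
  rw [convexHull_pi]
  intro j _
  by_cases hj : j = l
  · simp [hj, h0]
  · simp only [hj, if_false, convexHull_pair, segment_eq_Icc (zero_le_one' ℝ)]
    exact hx j

theorem half_le (n : ℕ) (a : (Fin n → ℝ) →ₗ[ℝ] ℝ) (c : ℝ) (V : Set (Fin n → ℝ))
    (h : ∀ v ∈ V, a v ≤ c) : ∀ v ∈ convexHull ℝ V, a v ≤ c := by
  intro v hv
  exact convexHull_min (t := {w | a w ≤ c}) h (convex_halfSpace_le a.isLinear c) hv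

theorem stmt19 (n : ℕ) (hn : 7 ≤ n) (hmod : n % 6 = 1) :
    ∃ (V : Set (Fin n → ℝ)) (P : Set (Fin n → ℝ)), V.Finite ∧ P = convexHull ℝ V ∧
      P ⊆ cube n ∧
      integerHull n P = Lk n 2 P ∧
      Lk n 2 P ⊂ Tk n ((n - 1) / 6) P := by
  have hpos : 0 < n := by omega
  set l : Fin n := ⟨0, hpos⟩ with hl
  let pr : Fin n → ((Fin n → ℝ) →ₗ[ℝ] ℝ) := fun j => LinearMap.proj j
  set V : Set (Fin n → ℝ) := (corners n ∩ {x | x l = 0}) ∪ (qpt n '' {i | i ≠ l}) with hV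
  have hcf : (corners n).Finite := by
    have : corners n = Set.pi univ (fun _ : Fin n => ({0, 1} : Set ℝ)) := by
      ext x
      simp [corners, Set.mem_pi]
    rw [this]
    exact Set.Finite.pi fun _ => by simp
  have hVf : V.Finite := (hcf.inter_of_left _).union ((Set.toFinite _).image _)
  set P := convexHull ℝ V with hP
  have hPc : Convex ℝ P := convex_convexHull ℝ V
  have hVcube : ∀ v ∈ V, ∀ i, 0 ≤ v i ∧ v i ≤ 1 := by
    rintro v (⟨hv, -⟩ | ⟨i, hi, rfl⟩) j
    · rcases hv j with h | h <;> rw [h] <;> norm_num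
    · simp only [qpt]
      split_ifs <;> norm_num
  have hcube : P ⊆ cube n := by
    intro x hx i
    constructor
    · have := half_le n (-(pr i)) 0 V (fun v hv => by simpa [pr] using (hVcube v hv i).1) x hx
      simpa [pr] using this
    · have := half_le n (pr i) 1 V (fun v hv => by simpa [pr] using (hVcube v hv i).2) x hx
      simpa [pr] using this
  have hb : ∀ x ∈ P, ∀ j, x l ≤ 2 * x j := by
    intro x hx j
    have := half_le n (pr l - (2 : ℝ) • pr j) 0 V (by
      rintro v hv
      have h0 := (hVcube v hv j).1
      simp only [pr, LinearMap.sub_apply, LinearMap.smul_apply, LinearMap.proj_apply, smul_eq_mul]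
      rcases hv with ⟨-, hv⟩ | ⟨i, hi, rfl⟩
      · have : v l = 0 := hv
        linarith
      · have : qpt n i j ≥ 1 / 2 := by
          simp only [qpt]; split_ifs <;> norm_num
        have : qpt n i l ≤ 1 := by
          simp only [qpt]; split_ifs <;> norm_num
        linarith) x hx
    simp only [pr, LinearMap.sub_apply, LinearMap.smul_apply, LinearMap.proj_apply,
      smul_eq_mul] at this
    linarith
  have hs : ∀ x ∈ P, ∑ j, x j ≤ n - 1 / 2 := by
    intro x hx
    have := half_le n (∑ j, pr j) (n - 1 / 2) V (by
      rintro v hv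
      simp only [pr, LinearMap.sum_apply, LinearMap.proj_apply]
      have key : ∃ i, v i ≤ 1 / 2 := by
        rcases hv with ⟨-, hv⟩ | ⟨i, hi, rfl⟩
        · have : v l = 0 := hv
          exact ⟨l, by rw [this]; norm_num⟩
        · exact ⟨i, by simp [qpt]⟩
      obtain ⟨i, hi⟩ := key
      have h1 : 1 - v i ≤ ∑ j, (1 - v j) :=
        Finset.single_le_sum (f := fun j => 1 - v j)
          (fun j _ => by have := (hVcube v hv j).2; linarith) (Finset.mem_univ i)
      rw [Finset.sum_sub_distrib] at h1
      simp at h1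
      linarith) x hx
    simpa [pr, LinearMap.sum_apply] using this
  have hL1 : ∀ w ∈ Lop n P, w l ≠ 1 := by
    intro w hw hw1
    have hwP := lop_subset n P hPc l hw
    have hall : ∀ j, 1 ≤ w j := by
      intro j
      have := half_le n (pr l - pr j) 0 _ (by
        rintro v (⟨hv, hv0⟩ | ⟨hv, hv1⟩)
        · have h := hb v hv j
          have hv0 : v j = 0 := hv0
          simp only [pr, LinearMap.sub_apply, LinearMap.proj_apply]
          linarith
        · have h := (hcube hv l).2
          have hv1 : v j = 1 := hv1
          simp only [pr, LinearMap.sub_apply, LinearMap.proj_apply]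
          linarith) w (mem_iInter.1 hw j)
      simp only [pr, LinearMap.sub_apply, LinearMap.proj_apply] at this
      linarith
    have h1 : ∑ j : Fin n, (1 : ℝ) ≤ ∑ j, w j := Finset.sum_le_sum fun j _ => hall j
    have h2 := hs w hwP
    simp at h1
    linarith
  have hVP : V ⊆ P := subset_convexHull ℝ V
  have hface : ∀ x ∈ P, x l = 0 → x ∈ integerHull n P := by
    intro x hx h0
    refine convexHull_mono ?_ (face_hull n l x (hcube hx) h0)
    intro y hy
    exact ⟨hVP (Or.inl hy), hy.1⟩
  have hL2 : ∀ x ∈ Lop n (Lop n P), x ∈ convexHull ℝ (P ∩ {x | x l = 0}) := by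
    intro x hx
    refine convexHull_mono ?_ (mem_iInter.1 hx l)
    rintro y (⟨hy, hy0⟩ | ⟨hy, hy1⟩)
    · exact ⟨lop_subset n P hPc l hy, hy0⟩
    · exact absurd hy1 (hL1 y hy)
  have hEq : integerHull n P = Lk n 2 P := by
    apply Subset.antisymm
    · refine convexHull_min ?_ (lop_convex n _)
      intro x hx
      exact lop_corners n _ ⟨lop_corners n P hx, hx.2⟩
    · intro x hx
      exact convexHull_min (fun y hy => hface y hy.1 hy.2) (convex_convexHull ℝ _) (hL2 x hx)
  refine ⟨V, P, hVf, hP, hcube, hEq, ?_⟩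
  have hz : (fun _ => 1 / 2 : Fin n → ℝ) ∈ Tk n ((n - 1) / 6) P := by
    refine mem_iInter₂.2 fun Q hQ => ?_
    have hQc := rk_convex n _ P Q hPc hQ
    have hQi := rk_corners n _ P Q hQ
    obtain ⟨i, hi, hiQ⟩ := rk_qpt n l _ P Q ∅ hQ (by simp; omega)
      (fun i hi _ => hVP (Or.inr ⟨i, hi, rfl⟩))
    have h0 : (0 : Fin n → ℝ) ∈ Q := hQi ⟨hVP (Or.inl ⟨fun _ => Or.inl rfl, rfl⟩), fun _ => Or.inl rfl⟩
    have hec : (Pi.single i 1 : Fin n → ℝ) ∈ corners n := by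
      intro j
      by_cases hj : j = i
      · right; rw [hj]; simp
      · left; simp [hj]
    have hel : (Pi.single i 1 : Fin n → ℝ) l = 0 := by
      simp [Ne.symm hi]
    have he : (Pi.single i 1 : Fin n → ℝ) ∈ Q := hQi ⟨hVP (Or.inl ⟨hec, hel⟩), hec⟩
    have hm := hQc h0 he (by norm_num : (0 : ℝ) ≤ 1 / 2) (by norm_num : (0 : ℝ) ≤ 1 / 2) (by norm_num)
    have hf := hQc hiQ hm (by norm_num : (0 : ℝ) ≤ 1 / 2) (by norm_num : (0 : ℝ) ≤ 1 / 2) (by norm_num)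
    convert hf using 1
    ext j
    by_cases hj : j = i
    · subst hj
      simp [qpt]; norm_num
    · simp [qpt, hj]
  rw [ssubset_iff_of_subset]
  · refine ⟨_, hz, fun hzL => ?_⟩
    have h1 := half_le n (pr l) 0 _ (fun v hv => le_of_eq hv.2) _ (hL2 _ hzL)
    simp only [pr, LinearMap.proj_apply] at h1
    norm_num at h1
  · rw [← hEq]
    intro x hx
    refine mem_iInter₂.2 fun Q hQ => ?_
    exact convexHull_min (rk_corners n _ P Q hQ) (rk_convex n _ P Q hPc hQ) hx
end
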